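/- arXiv:2202.04535 — 10 statements merged into one kernel-verified Lean document; each statement's English description precedes it below -/
import Mathlib

section
/- Let S be an infinite set, let n, m ∈ ℕ, let s ∈ S^m, and let σ : S^{n+1} → S^m be a system of functional equations σ(x_1,…,x_n,x_{n+1}) = s given by functions f_1,…,f_m : S^{n+1} → S. Suppose there exists k ∈ ℕ such that for every t ∈ S the system σ(x_1,…,x_n,t) = s has at most k solutions (x_1,…,x_n) ∈ S^n. Then the following are equivalent: (1) the system σ(x_1,…,x_n,x_{n+1}) = s is partition regular over S; (2) the set of ultrafilter witnesses of the partition regularity of the system is non-empty, and for every witness 𝒰 there exists B ∈ 𝒰 such that every solution (a_1,…,a_{n+1}) with all entries in B is constant; (3) there exists r ∈ ℕ and a coloring c₀ : S → {1,…,r} such that the system has a c₀-monochromatic solution and every c₀-monochromatic solution of the system is constant. -/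
open Classical in
theorem aux_fin {S : Type*} (d : ℕ) (N : S → Finset S) (hN : ∀ u, (N u).card ≤ d)
    (hself : ∀ u, u ∉ N u) : ∀ (l : ℕ) (V : Finset S), V.card = l →
    ∃ c : S → Fin (2 * d + 1), ∀ u ∈ V, ∀ v ∈ V, v ∈ N u → c u ≠ c v := by
  intro l
  induction l with
  | zero =>
    intro V hV
    rw [Finset.card_eq_zero] at hV
    subst hV
    exact ⟨fun _ => 0, by simp⟩
  | succ l ih =>
    intro V hV
    obtain ⟨v, hv, hdeg⟩ : ∃ v ∈ V, (V.filter (fun u => v ∈ N u)).card ≤ d := by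
      by_contra! h
      have h1 := Finset.sum_card_bipartiteAbove_eq_sum_card_bipartiteBelow
        (s := V) (t := V) (fun u v => v ∈ N u)
      have h2 : ∑ u ∈ V, (Finset.bipartiteAbove (fun u v => v ∈ N u) V u).card ≤ ∑ u ∈ V, d := by
        apply Finset.sum_le_sum
        intro u _
        refine le_trans (Finset.card_le_card ?_) (hN u)
        intro w hw
        simpa using (Finset.mem_filter.1 hw).2
      have h3 : ∑ v ∈ V, d < ∑ v ∈ V, (Finset.bipartiteBelow (fun u v => v ∈ N u) V v).card := by
        apply Finset.sum_lt_sum_of_nonempty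
        · rw [← Finset.card_pos]; omega
        · intro w hw
          exact h w hw
      omega
    obtain ⟨c, hc⟩ := ih (V.erase v) (by rw [Finset.card_erase_of_mem hv]; omega)
    obtain ⟨q, hq⟩ : ∃ q, q ∉ (N v ∪ V.filter (fun u => v ∈ N u)).image c := by
      by_contra! h
      have h1 := Finset.card_le_card (fun x _ => h x : Finset.univ ⊆ _)
      have h2 := Finset.card_image_le (s := N v ∪ V.filter (fun u => v ∈ N u)) (f := c)
      have h3 := Finset.card_union_le (N v) (V.filter (fun u => v ∈ N u))
      have h4 := hN v
      simp only [Finset.card_univ, Fintype.card_fin] at h1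
      omega
    have hq' : ∀ u, (u ∈ N v ∨ (u ∈ V ∧ v ∈ N u)) → c u ≠ q := by
      intro u hu he
      apply hq
      rw [Finset.mem_image]
      exact ⟨u, by simpa using hu, he⟩
    refine ⟨Function.update c v q, ?_⟩
    intro u hu w hw huw
    by_cases h1 : u = v
    · subst h1
      have h2 : w ≠ u := by rintro rfl; exact hself _ huw
      rw [Function.update_self, Function.update_of_ne h2]
      exact (hq' w (Or.inl huw)).symm
    · by_cases h2 : w = v
      · subst h2
        rw [Function.update_self, Function.update_of_ne h1]
        exact hq' u (Or.inr ⟨hu, huw⟩)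
      · rw [Function.update_of_ne h2, Function.update_of_ne h1]
        exact hc u (by simp [*]) w (by simp [*]) huw

theorem aux_inf {S : Type*} (d : ℕ) (N : S → Finset S) (hN : ∀ u, (N u).card ≤ d)
    (hself : ∀ u, u ∉ N u) :
    ∃ c : S → Fin (2 * d + 1), ∀ u v, v ∈ N u → c u ≠ c v := by
  classical
  choose C hC using fun V : Finset S => aux_fin d N hN hself V.card V rfl
  let F : Ultrafilter (Finset S) := Ultrafilter.of Filter.atTop
  have hF : ∀ u : S, ∃ i, ∀ᶠ V in (F : Filter (Finset S)), C V u = i := by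
    intro u
    obtain ⟨i, hi⟩ := Ultrafilter.eq_pure_of_finite (F.map (fun V => C V u))
    refine ⟨i, ?_⟩
    have : ({i} : Set (Fin (2 * d + 1))) ∈ F.map (fun V => C V u) := by
      rw [hi]; exact Ultrafilter.mem_pure.2 rfl
    exact Ultrafilter.mem_map.1 this
  choose c hc using hF
  refine ⟨c, fun u v huv => ?_⟩
  have hge : ∀ᶠ V in (F : Filter (Finset S)), {u, v} ≤ V :=
    (Filter.eventually_ge_atTop ({u, v} : Finset S)).filter_mono (Ultrafilter.of_le Filter.atTop)
  obtain ⟨V, h1, h2, h3⟩ := ((hc u).and ((hc v).and hge)).exists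
  rw [← h1, ← h2]
  exact hC V u (h3 (by simp)) v (h3 (by simp)) huv

/-- Main Theorem: for a system `σ(x₁,…,xₙ,x_{n+1}) = s` whose solutions in the first
`n` variables are uniformly bounded in number (for each fixed value of the last variable),
partition regularity, the witness condition, and the existence of a coloring whose only
monochromatic solutions are constant are all equivalent. -/
theorem stmt_0 {S : Type*} [Infinite S] (n m : ℕ) (s : Fin m → S)
    (σ : (Fin (n + 1) → S) → Fin m → S)
    (hbound : ∃ k : ℕ, ∀ t : S,
      {x : Fin n → S | σ (Fin.snoc x t) = s}.Finite ∧
      {x : Fin n → S | σ (Fin.snoc x t) = s}.ncard ≤ k) :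
    List.TFAE
      [ -- (1) the system is partition regular over `S`
        ∀ (r : ℕ) (c : S → Fin r), ∃ a : Fin (n + 1) → S,
          (∀ i j, c (a i) = c (a j)) ∧ σ a = s,
        -- (2) there is a witness, and every witness contains a set on which all
        -- solutions are constant
        (∃ 𝒰 : Ultrafilter S, ∀ A ∈ 𝒰, ∃ a : Fin (n + 1) → S,
            (∀ i, a i ∈ A) ∧ σ a = s) ∧
          (∀ 𝒰 : Ultrafilter S,
            (∀ A ∈ 𝒰, ∃ a : Fin (n + 1) → S, (∀ i, a i ∈ A) ∧ σ a = s) →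
            ∃ B ∈ 𝒰, ∀ a : Fin (n + 1) → S,
              (∀ i, a i ∈ B) → σ a = s → ∀ i j, a i = a j),
        -- (3) there is a coloring with a monochromatic solution all of whose
        -- monochromatic solutions are constant
        ∃ (r : ℕ) (c₀ : S → Fin r),
          (∃ a : Fin (n + 1) → S, (∀ i j, c₀ (a i) = c₀ (a j)) ∧ σ a = s) ∧
          (∀ a : Fin (n + 1) → S, (∀ i j, c₀ (a i) = c₀ (a j)) → σ a = s →
            ∀ i j, a i = a j) ] := by
  classical
  obtain ⟨k, hk⟩ := hbound
  obtain ⟨R, c₀, hc₀⟩ : ∃ (r : ℕ) (c₀ : S → Fin r),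
      ∀ a : Fin (n + 1) → S, (∀ i j, c₀ (a i) = c₀ (a j)) → σ a = s → ∀ i j, a i = a j := by
    let N : S → Finset S := fun t =>
      ((hk t).1.toFinset.biUnion (fun x => Finset.univ.image x)).erase t
    obtain ⟨c, hc⟩ := aux_inf (k * n) N (by
      intro t
      refine le_trans (Finset.card_erase_le) ?_
      refine le_trans (Finset.card_biUnion_le_card_mul _ _ n ?_) ?_
      · intro x _
        exact le_trans Finset.card_image_le (by simp)
      · apply Nat.mul_le_mul_right
        rw [← Set.ncard_eq_toFinset_card _ (hk t).1]
        exact (hk t).2) (by intro u; simp [N])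
    refine ⟨_, c, fun a ha hs => ?_⟩
    have key : ∀ i, a i = a (Fin.last n) := by
      intro i
      induction i using Fin.lastCases with
      | last => rfl
      | cast i =>
        by_contra hne
        refine hc (a (Fin.last n)) (a i.castSucc) ?_ (ha _ _)
        simp only [N, Finset.mem_erase, Finset.mem_biUnion, Set.Finite.mem_toFinset,
          Set.mem_ofPred_eq, Finset.mem_image, Finset.mem_univ, true_and]
        refine ⟨hne, Fin.init a, ?_, i, rfl⟩
        rw [Fin.snoc_init_self]
        exact hs
    intro i j
    rw [key i, key j]
  have h21 : ∀ (𝒰 : Ultrafilter S) (r : ℕ) (c : S → Fin r), ∃ i, c ⁻¹' {i} ∈ 𝒰 := by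
    intro 𝒰 r c
    obtain ⟨i, hi⟩ := Ultrafilter.eq_pure_of_finite (𝒰.map c)
    refine ⟨i, ?_⟩
    have : ({i} : Set (Fin r)) ∈ 𝒰.map c := by
      rw [hi]; exact Ultrafilter.mem_pure.2 rfl
    exact Ultrafilter.mem_map.1 this
  tfae_have 1 → 3 := fun h => ⟨R, c₀, h R c₀, hc₀⟩
  tfae_have 3 → 2 := by
    rintro ⟨r, c, ⟨a, ha, hs⟩, hc⟩
    refine ⟨⟨pure (a 0), fun A hA => ⟨a, fun i => ?_, hs⟩⟩, fun 𝒰 _ => ?_⟩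
    · rw [hc a ha hs i 0]
      exact Ultrafilter.mem_pure.1 hA
    · obtain ⟨i, hi⟩ := h21 𝒰 r c
      refine ⟨_, hi, fun b hb hs => hc b (fun p q => ?_) hs⟩
      exact (hb p).trans (hb q).symm
  tfae_have 2 → 1 := by
    rintro ⟨⟨𝒰, h𝒰⟩, -⟩ r c
    obtain ⟨i, hi⟩ := h21 𝒰 r c
    obtain ⟨a, ha, hs⟩ := h𝒰 _ hi
    exact ⟨a, fun p q => (ha p).trans (ha q).symm, hs⟩
  tfae_finish
end

section
/- Let S be an infinite set, let n, m ∈ ℕ, let s ∈ S^m, and let σ : S^{n+1} → S^m be a system of functional equations. Suppose there exists k ∈ ℕ such that for every t ∈ S the system σ(x_1,…,x_n,t) = s has at most k solutions (x_1,…,x_n) ∈ S^n. Then the system σ(x_1,…,x_n,x_{n+1}) = s is partition regular over S if and only if it admits a constant solution, i.e., there exists a ∈ S with σ(a,…,a) = s. -/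
theorem aux_fin_s1 {S : Type*} [DecidableEq S] (k : ℕ) (F : S → Finset S) (hF : ∀ t, (F t).card ≤ k)
    (N : ℕ) : ∀ A : Finset S, A.card = N → ∃ c : S → Fin (2 * k + 1),
      ∀ x ∈ A, ∀ y ∈ A, x ≠ y → y ∈ F x → c x ≠ c y := by
  induction N with
  | zero =>
    intro A hA
    rw [Finset.card_eq_zero] at hA
    subst hA
    exact ⟨fun _ => 0, by simp⟩
  | succ N ih =>
    intro A hA
    have hne : A.Nonempty := Finset.card_pos.mp (by omega)
    obtain ⟨v, hv, hdeg⟩ : ∃ v ∈ A, (A.filter (fun x => v ∈ F x)).card ≤ k := by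
      by_contra! hcon
      have h1 := Finset.sum_card_bipartiteAbove_eq_sum_card_bipartiteBelow
        (s := A) (t := A) (fun x y => y ∈ F x)
      have h2 : ∑ a ∈ A, (A.bipartiteAbove (fun x y => y ∈ F x) a).card ≤ ∑ a ∈ A, k := by
        apply Finset.sum_le_sum
        intro a _
        refine le_trans (Finset.card_le_card ?_) (hF a)
        intro y hy
        simp [Finset.bipartiteAbove] at hy
        exact hy.2
      have h3 : ∑ a ∈ A, k < ∑ b ∈ A, (A.bipartiteBelow (fun x y => y ∈ F x) b).card :=
        Finset.sum_lt_sum_of_nonempty hne (fun b hb => hcon b hb)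
      omega
    obtain ⟨c, hc⟩ := ih (A.erase v) (by rw [Finset.card_erase_of_mem hv]; omega)
    let B : Finset (Fin (2 * k + 1)) := (F v ∪ A.filter (fun x => v ∈ F x)).image c
    have hB : B.card < Fintype.card (Fin (2 * k + 1)) := by
      have h1 : B.card ≤ _ := Finset.card_image_le
      have h2 := Finset.card_union_le (F v) (A.filter (fun x => v ∈ F x))
      have h3 := hF v
      rw [Fintype.card_fin]
      omega
    obtain ⟨d, hd⟩ : ∃ d, d ∉ B := by
      by_contra! hcon
      have : B = Finset.univ := Finset.eq_univ_of_forall hcon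
      rw [this, Finset.card_univ] at hB
      omega
    have hd' : ∀ x, (x ∈ F v ∨ (x ∈ A ∧ v ∈ F x)) → d ≠ c x := by
      intro x hx h
      apply hd
      rw [h]
      exact Finset.mem_image_of_mem c (by simpa using hx)
    refine ⟨Function.update c v d, ?_⟩
    intro x hx y hy hxy hyx
    by_cases hxv : x = v
    · subst hxv
      rw [Function.update_self, Function.update_of_ne (Ne.symm hxy)]
      exact hd' y (Or.inl hyx)
    · by_cases hyv : y = v
      · subst hyv
        rw [Function.update_self, Function.update_of_ne hxy]
        exact (hd' x (Or.inr ⟨hx, hyx⟩)).symm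
      · rw [Function.update_of_ne hxv, Function.update_of_ne hyv]
        exact hc x (by simp [hxv, hx]) y (by simp [hyv, hy]) hxy hyx

theorem aux_inf_s1 {S : Type*} [DecidableEq S] (k : ℕ) (F : S → Finset S)
    (hF : ∀ t, (F t).card ≤ k) : ∃ c : S → Fin (2 * k + 1),
      ∀ x y, x ≠ y → y ∈ F x → c x ≠ c y := by
  choose g hg using fun A : Finset S => aux_fin_s1 k F hF A.card A rfl
  obtain ⟨c, hc⟩ := Finset.rado_selection g
  refine ⟨c, fun x y hxy hyx => ?_⟩
  obtain ⟨t, hst, ht⟩ := hc {x, y}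
  rw [ht x (by simp), ht y (by simp)]
  exact hg t x (hst (by simp)) y (hst (by simp)) hxy hyx

/-- A system `σ(x₁,…,xₙ,x_{n+1}) = s` whose solutions in the first `n` variables are
uniformly bounded in number (for each fixed value of the last variable) is partition
regular over `S` if and only if it admits a constant solution. -/
theorem stmt_1 {S : Type*} [Infinite S] (n m : ℕ) (s : Fin m → S)
    (σ : (Fin (n + 1) → S) → Fin m → S)
    (hbound : ∃ k : ℕ, ∀ t : S,
      {x : Fin n → S | σ (Fin.snoc x t) = s}.Finite ∧
      {x : Fin n → S | σ (Fin.snoc x t) = s}.ncard ≤ k) :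
    (∀ (r : ℕ) (c : S → Fin r), ∃ a : Fin (n + 1) → S,
        (∀ i j, c (a i) = c (a j)) ∧ σ a = s) ↔
      ∃ a : S, σ (fun _ => a) = s := by
  classical
  constructor
  · intro hpr
    by_contra! hcon
    obtain ⟨k, hk⟩ := hbound
    have h : ∀ a : Fin (n + 1) → S, σ a = s → ∃ i, a (Fin.last n) ≠ a i := by
      intro a ha
      by_contra! hall
      apply hcon (a (Fin.last n))
      rw [← ha]
      congr 1
      funext i
      exact hall i
    choose! i hi using h
    obtain ⟨c, hc⟩ := aux_inf_s1 k
      (fun t => (hk t).1.toFinset.image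
        (fun x => (Fin.snoc x t : Fin (n + 1) → S) (i (Fin.snoc x t)))) (by
        intro t
        refine le_trans Finset.card_image_le ?_
        rw [← Set.ncard_eq_toFinset_card _ (hk t).1]
        exact (hk t).2)
    obtain ⟨a, hmono, ha⟩ := hpr _ c
    refine hc (a (Fin.last n)) (a (i a)) (hi a ha) ?_ (hmono _ _)
    have hs : (Fin.snoc (Fin.init a) (a (Fin.last n)) : Fin (n + 1) → S) = a :=
      Fin.snoc_init_self a
    rw [Finset.mem_image]
    refine ⟨Fin.init a, ?_, ?_⟩
    · rw [Set.Finite.mem_toFinset, Set.mem_setOf_eq, hs]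
      exact ha
    · simp only [hs]
  · rintro ⟨a, ha⟩ r c
    exact ⟨fun _ => a, fun _ _ => rfl, ha⟩
end

section
/- Let S be an infinite set, let n, m ∈ ℕ, let s ∈ S^m, and let σ : S^{n+1} → S^m be a system of functional equations. Suppose there exists k ∈ ℕ such that for every t ∈ S the system σ(x_1,…,x_n,t) = s has at most k solutions (x_1,…,x_n) ∈ S^n. Then for every ultrafilter 𝒰 on S the following are equivalent: (1) 𝒰 is a witness of the partition regularity of σ(x_1,…,x_n,x_{n+1}) = s; (2) the set Δ_σ = { a ∈ S : σ(a,…,a) = s } belongs to 𝒰. -/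
lemma aux_color {S : Type*} [LinearOrder S] (f : S → S) :
    ∃ c : S → Bool, ∀ t, t < f t → c t ≠ c (f t) := by
  classical
  have hne : (⋂ t : S, {c : S → Bool | t < f t → c t ≠ c (f t)}).Nonempty := by
    apply CompactSpace.iInter_nonempty
    · intro t
      by_cases h : t < f t
      · have : {c : S → Bool | t < f t → c t ≠ c (f t)} =
            (fun c : S → Bool => (c t, c (f t))) ⁻¹' {p | p.1 ≠ p.2} := by
          ext c; simp [h]
        rw [this]
        exact (isClosed_discrete _).preimage (by fun_prop)
      · simp [h]
    · intro T
      induction T using Finset.induction_on_min with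
      | empty => simp
      | insert a T ha ih =>
        obtain ⟨c, hc⟩ := ih
        simp only [Set.mem_iInter, Set.mem_setOf_eq] at hc
        refine ⟨Function.update c a (!c (f a)), ?_⟩
        simp only [Set.mem_iInter, Set.mem_setOf_eq]
        intro t ht hlt
        rcases Finset.mem_insert.1 ht with rfl | ht
        · rw [Function.update_self, Function.update_of_ne hlt.ne']
          simp
        · have h1 := ha t ht
          rw [Function.update_of_ne h1.ne', Function.update_of_ne (h1.trans hlt).ne']
          exact hc t ht hlt
  obtain ⟨c, hc⟩ := hne
  exact ⟨c, fun t => Set.mem_iInter.1 hc t⟩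

lemma aux_bool {S : Type*} (U : Ultrafilter S) (c : S → Bool) : ∃ b, {t | c t = b} ∈ U := by
  rcases U.mem_or_compl_mem {t | c t = true} with h | h
  · exact ⟨true, h⟩
  · refine ⟨false, ?_⟩
    convert h using 1
    ext t; simp

lemma aux_katetov {S : Type*} (U : Ultrafilter S) (g : S → S) :
    ∃ B ∈ U, ∀ t ∈ B, g t ∈ B → g t = t := by
  classical
  let _ : LinearOrder S := linearOrderOfSTO WellOrderingRel
  obtain ⟨c, hc⟩ := aux_color g
  obtain ⟨d, hd⟩ := aux_color (S := Sᵒᵈ) g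
  obtain ⟨b, hb⟩ := aux_bool U c
  obtain ⟨b', hb'⟩ := aux_bool U d
  refine ⟨_, Filter.inter_mem hb hb', ?_⟩
  rintro t ⟨h1, h2⟩ ⟨h3, h4⟩
  rcases lt_trichotomy t (g t) with h | h | h
  · exact absurd (Eq.trans h1 (Eq.symm h3)) (hc t h)
  · exact h.symm
  · exact absurd (Eq.trans h2 (Eq.symm h4)) (hd t h)

lemma aux_enum {α : Type*} (d : α) (X : Set α) (k : ℕ) (hX : X.Finite) (hk : X.ncard ≤ k) :
    ∃ e : Fin k → α, ∀ x ∈ X, ∃ i, e i = x := by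
  classical
  refine ⟨fun i => hX.toFinset.toList.getD i d, fun x hx => ?_⟩
  have hm : x ∈ hX.toFinset.toList := by simpa using hx
  obtain ⟨i, hi, h⟩ := List.mem_iff_getElem.1 hm
  have hi2 : i < k := by
    rw [Finset.length_toList, ← Set.ncard_eq_toFinset_card X hX] at hi
    omega
  exact ⟨⟨i, hi2⟩, by simp only [List.getD_eq_getElem _ _ hi, h]⟩

/-- For a system `σ(x₁,…,xₙ,x_{n+1}) = s` whose solutions in the first `n` variables are
uniformly bounded in number (for each fixed value of the last variable), an ultrafilter
`𝒰` on `S` witnesses the partition regularity of the system if and only if the set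
`Δ_σ = {a ∈ S | σ(a,…,a) = s}` belongs to `𝒰`. -/
theorem stmt_2 {S : Type*} [Infinite S] (n m : ℕ) (s : Fin m → S)
    (σ : (Fin (n + 1) → S) → Fin m → S)
    (hbound : ∃ k : ℕ, ∀ t : S,
      {x : Fin n → S | σ (Fin.snoc x t) = s}.Finite ∧
      {x : Fin n → S | σ (Fin.snoc x t) = s}.ncard ≤ k)
    (𝒰 : Ultrafilter S) :
    (∀ A ∈ 𝒰, ∃ a : Fin (n + 1) → S, (∀ i, a i ∈ A) ∧ σ a = s) ↔
      {a : S | σ (fun _ => a) = s} ∈ 𝒰 := by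
  constructor
  · intro h
    obtain ⟨k, hk⟩ := hbound
    have he := fun t => aux_enum (fun _ : Fin n => t) _ k (hk t).1 (hk t).2
    choose e he using he
    have hB := fun (p : Fin k × Fin n) => aux_katetov 𝒰 (fun t => e t p.1 p.2)
    choose B hBU hB using hB
    by_contra hD
    have hD' := Ultrafilter.compl_mem_iff_notMem.2 hD
    have hI : (⋂ p, B p) ∈ (𝒰 : Filter S) := Filter.iInter_mem.2 hBU
    obtain ⟨a, ha, hs⟩ := h _ (Filter.inter_mem hD' hI)
    have hsn : σ (Fin.snoc (fun j : Fin n => a j.castSucc) (a (Fin.last n))) = s := by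
      rw [← hs]
      congr 1
      exact Fin.snoc_init_self a
    obtain ⟨i, hi⟩ := he (a (Fin.last n)) _ hsn
    apply (ha (Fin.last n)).1
    have hc : a = fun _ => a (Fin.last n) := by
      funext j
      refine Fin.lastCases rfl (fun j => ?_) j
      have := hB (i, j) (a (Fin.last n)) (Set.mem_iInter.1 (ha _).2 _)
      simp only [hi] at this
      exact this (Set.mem_iInter.1 (ha _).2 _)
    show σ (fun _ => a (Fin.last n)) = s
    rw [← hc]; exact hs
  · intro h A hA
    obtain ⟨a, h1, h2⟩ := 𝒰.nonempty_of_mem (Filter.inter_mem hA h)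
    exact ⟨fun _ => a, fun _ => h1, h2⟩
end

section
/- Let P_1,…,P_m ∈ ℤ[x,y] be polynomials in two variables each of degree at least 1, and consider the system of equations P_1(x,y) = 0, …, P_m(x,y) = 0. The following are equivalent: (1) the system has a constant solution in the positive integers, i.e., there exists a ∈ ℕ with a ≥ 1 and P_i(a,a) = 0 for all i ∈ {1,…,m}; (2) the system is partition regular over the positive integers. -/
open MvPolynomial

theorem greedy_aux (k : ℕ) (R : ℕ → ℕ → Prop)
    (h : ∀ n, ∃ F : Finset ℕ, F.card ≤ k ∧ ∀ m, R n m → m ∈ F) :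
    ∃ c : ℕ → Fin (k + 1), ∀ n m, m < n → R n m → c n ≠ c m := by
  choose F hF hR using h
  have hex : ∀ (n : ℕ) (g : ℕ → Fin (k + 1)), ∃ x, x ∉ (F n).image g := by
    intro n g
    by_contra! hc
    have h1 : (F n).image g = Finset.univ := Finset.eq_univ_iff_forall.2 hc
    have h2 := Finset.card_image_le (s := F n) (f := g)
    rw [h1, Finset.card_univ, Fintype.card_fin] at h2
    have := hF n
    omega
  choose φ hφ using hex
  let c : ℕ → Fin (k + 1) := WellFounded.fix (C := fun _ => Fin (k + 1)) Nat.lt_wfRel.wf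
      (fun n ih => φ n (fun m => if hm : m < n then ih m hm else 0))
  have hc : ∀ n, c n = φ n (fun m => if m < n then c m else 0) := by
    intro n
    exact WellFounded.fix_eq _ _ n
  refine ⟨c, fun n m hmn hr he => ?_⟩
  have := hφ n (fun m => if m < n then c m else 0)
  rw [← hc n] at this
  apply this
  rw [Finset.mem_image]
  exact ⟨m, hR n m hr, by simp [hmn, he]⟩

theorem fin_aux1 (q : MvPolynomial (Fin 1) ℤ) (hq : q ≠ 0) :
    ∃ S : Finset ℕ, ∀ a : ℕ, eval ![(a : ℤ)] q = 0 → a ∈ S := by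
  set Q := Polynomial.map (eval (![] : Fin 0 → ℤ)) (finSuccEquiv ℤ 0 q) with hQ
  have hinj : Function.Injective (eval (![] : Fin 0 → ℤ)) := by
    intro x y hxy
    rw [eq_C_of_isEmpty x, eq_C_of_isEmpty y] at hxy ⊢
    simpa using hxy
  have hQ0 : Q ≠ 0 := by
    rw [hQ, Ne, Polynomial.map_eq_zero_iff hinj]
    simpa using hq
  refine ⟨Q.roots.toFinset.image Int.toNat, fun a ha => ?_⟩
  have h2 := eval_eq_eval_mv_eval' (![] : Fin 0 → ℤ) (a : ℤ) q
  rw [Finset.mem_image]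
  refine ⟨a, ?_, by simp⟩
  rw [Multiset.mem_toFinset, Polynomial.mem_roots hQ0, Polynomial.IsRoot, hQ, ← h2]
  exact ha

theorem fin_aux2 (p : MvPolynomial (Fin 2) ℤ) (hp : p ≠ 0) :
    ∃ (S : Finset ℕ) (D : ℕ), ∀ a : ℕ, a ∉ S → ∃ F : Finset ℕ, F.card ≤ D ∧
      ∀ b : ℕ, eval ![(b : ℤ), (a : ℤ)] p = 0 → b ∈ F := by
  set Q := finSuccEquiv ℤ 1 p with hQ
  have hQ0 : Q ≠ 0 := by simpa [hQ] using hp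
  obtain ⟨S, hS⟩ := fin_aux1 Q.leadingCoeff (by simpa using hQ0)
  refine ⟨S, Q.natDegree, fun a ha => ?_⟩
  set T := Polynomial.map (eval ![(a : ℤ)]) Q with hT
  have hT0 : T ≠ 0 := by
    intro h
    apply ha
    apply hS
    have := congrArg (fun t => Polynomial.coeff t Q.natDegree) h
    simpa [hT] using this
  refine ⟨T.roots.toFinset.image Int.toNat, ?_, fun b hb => ?_⟩
  · exact Finset.card_image_le.trans ((Multiset.toFinset_card_le _).trans
      ((Polynomial.card_roots' T).trans Polynomial.natDegree_map_le))
  have h2 := eval_eq_eval_mv_eval' ![(a : ℤ)] (b : ℤ) p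
  rw [Finset.mem_image]
  refine ⟨b, ?_, by simp⟩
  rw [Multiset.mem_toFinset, Polynomial.mem_roots hT0, Polynomial.IsRoot, hT, hQ, ← h2]
  exact hb

theorem fin_aux3 (p : MvPolynomial (Fin 2) ℤ) (hp : p ≠ 0) :
    ∃ (S : Finset ℕ) (D : ℕ), ∀ a : ℕ, a ∉ S → ∃ F : Finset ℕ, F.card ≤ D ∧
      ∀ b : ℕ, eval ![(a : ℤ), (b : ℤ)] p = 0 → b ∈ F := by
  obtain ⟨S, D, h⟩ := fin_aux2 (rename (Equiv.swap (0 : Fin 2) 1) p) (by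
    intro h0
    exact hp ((rename_injective _ (Equiv.injective _)) (by simpa using h0)))
  refine ⟨S, D, fun a ha => ?_⟩
  obtain ⟨F, hF, hb⟩ := h a ha
  refine ⟨F, hF, fun b h0 => hb b ?_⟩
  rw [eval_rename, ← h0]
  congr 2
  funext i
  fin_cases i <;> simp

/-- A system of polynomial equations `P₁(x,y) = 0, …, P_m(x,y) = 0` with `Pᵢ ∈ ℤ[x,y]`
nonconstant is partition regular over the positive integers if and only if it has a
constant solution in the positive integers. -/
theorem stmt_4 (m : ℕ) (P : Fin m → MvPolynomial (Fin 2) ℤ)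
    (hdeg : ∀ i, 1 ≤ (P i).totalDegree) :
    (∃ a : ℕ, 0 < a ∧ ∀ i, eval ![(a : ℤ), (a : ℤ)] (P i) = 0) ↔
      ∀ (r : ℕ) (c : ℕ → Fin r), ∃ a b : ℕ, 0 < a ∧ 0 < b ∧ c a = c b ∧
        ∀ i, eval ![(a : ℤ), (b : ℤ)] (P i) = 0 := by
  constructor
  · rintro ⟨a, ha, h⟩ r c
    exact ⟨a, a, ha, ha, rfl, h⟩
  intro h
  rcases Nat.eq_zero_or_pos m with rfl | hm
  · exact ⟨1, one_pos, fun i => i.elim0⟩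
  set p := P ⟨0, hm⟩ with hpdef
  have hp : p ≠ 0 := by
    intro h0
    have := hdeg ⟨0, hm⟩
    rw [← hpdef, h0] at this
    simp at this
  obtain ⟨S, D, h1⟩ := fin_aux2 p hp
  obtain ⟨S', D', h2⟩ := fin_aux3 p hp
  let T := S ∪ S'
  obtain ⟨c, hc⟩ := greedy_aux (D + D') (fun a b => a ∉ T ∧
      (eval ![(a : ℤ), (b : ℤ)] p = 0 ∨ eval ![(b : ℤ), (a : ℤ)] p = 0)) (by
    intro n
    by_cases hn : n ∈ T
    · exact ⟨∅, by simp, fun m hm => absurd hn hm.1⟩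
    have hn' := hn
    simp only [T, Finset.mem_union, not_or] at hn'
    obtain ⟨F, hF, hb⟩ := h1 n hn'.1
    obtain ⟨F', hF', hb'⟩ := h2 n hn'.2
    refine ⟨F ∪ F', (Finset.card_union_le _ _).trans (by omega), ?_⟩
    rintro m ⟨-, h | h⟩
    · exact Finset.mem_union_right _ (hb' m h)
    · exact Finset.mem_union_left _ (hb m h))
  let d : ℕ → Option T × Fin (D + D' + 1) := fun n =>
    (if hn : n ∈ T then some ⟨n, hn⟩ else none, c n)
  let e := Fintype.equivFin (Option T × Fin (D + D' + 1))
  obtain ⟨a, b, ha, hb, hab, hz⟩ := h _ (fun n => e (d n))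
  have hd : d a = d b := e.injective hab
  have hd1 := congrArg Prod.fst hd
  have hd2 : c a = c b := congrArg Prod.snd hd
  simp only [d] at hd1
  have key : a = b := by
    by_cases haT : a ∈ T <;> by_cases hbT : b ∈ T
    · simpa [haT, hbT] using hd1
    · simp [haT, hbT] at hd1
    · simp [haT, hbT] at hd1
    · rcases lt_trichotomy a b with hlt | heq | hlt
      · exact absurd hd2.symm (hc b a hlt ⟨hbT, Or.inr (hz _)⟩)
      · exact heq
      · exact absurd hd2 (hc a b hlt ⟨haT, Or.inl (hz _)⟩)
  subst key
  exact ⟨a, ha, hz⟩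
end

section
/- Let R be an infinite integral domain, let S ⊆ R be an infinite subset, and let P_1,…,P_m ∈ R[x,y] be nonconstant polynomials in two variables over R. The following are equivalent: (1) the system P_1(x,y) = 0, …, P_m(x,y) = 0 has a constant solution in S, i.e., there exists a ∈ S with P_i(a,a) = 0 for all i; (2) the system is partition regular on S. -/
open MvPolynomial

theorem greedy_aux_s5 {α : Type*} (D : ℕ) (F : α → Finset α) (hF : ∀ a, (F a).card ≤ D) :
    ∃ c : α → Fin (D + 1), ∀ a b, a ≠ b → b ∈ F a → a ∈ F b → c a ≠ c b := by
  classical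
  have wf : WellFounded (WellOrderingRel (α := α)) := IsWellFounded.wf
  have key : ∀ (a : α) (g : α → Fin (D + 1)), ∃ k : Fin (D + 1), k ∉ (F a).image g := by
    intro a g
    by_contra! h
    have h1 : (Finset.univ : Finset (Fin (D + 1))) ⊆ (F a).image g := fun k _ => h k
    have h2 := Finset.card_le_card h1
    have h3 := Finset.card_image_le (s := F a) (f := g)
    have h4 := hF a
    simp only [Finset.card_univ, Fintype.card_fin] at h2
    omega
  choose pick hpick using key
  let c : α → Fin (D + 1) := wf.fix
    (fun a ih => pick a (fun b => if h : WellOrderingRel b a then ih b h else 0))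
  have hc : ∀ a, c a = pick a (fun b => if WellOrderingRel b a then c b else 0) := by
    intro a
    have := wf.fix_eq
      (fun a (ih : ∀ b, WellOrderingRel b a → Fin (D + 1)) =>
        pick a (fun b => if h : WellOrderingRel b a then ih b h else 0)) a
    simpa only [dite_eq_ite] using this
  have main : ∀ a b, WellOrderingRel b a → b ∈ F a → c a ≠ c b := by
    intro a b hr hb heq
    apply hpick a (fun b => if WellOrderingRel b a then c b else 0)
    rw [← hc a, heq]
    exact Finset.mem_image.2 ⟨b, hb, by simp [hr]⟩
  refine ⟨c, fun a b hab h1 h2 => ?_⟩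
  rcases trichotomous_of (WellOrderingRel (α := α)) a b with h | h | h
  · exact (main b a h h2).symm
  · exact absurd h hab
  · exact main a b h h1

theorem deg_aux {R : Type*} [CommRing R] (P : MvPolynomial (Fin 2) R)
    (f : Fin 2 → Polynomial R) (hf : ∀ i, (f i).natDegree ≤ 1) :
    (aeval f P).natDegree ≤ P.totalDegree := by
  simpa using aeval_natDegree_le P le_rfl f hf

theorem eval_aux {R : Type*} [CommRing R] (P : MvPolynomial (Fin 2) R)
    (f : Fin 2 → Polynomial R) (b : R) :
    (aeval f P).eval b = eval (fun i => (f i).eval b) P := by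
  induction P using MvPolynomial.induction_on with
  | C a => simp
  | add p q hp hq => simp [hp, hq]
  | mul_X p i hp => simp [hp]

/-- For an infinite integral domain `R`, an infinite subset `S ⊆ R`, and nonconstant
polynomials `P₁,…,P_m ∈ R[x,y]`, the system `P₁(x,y) = 0, …, P_m(x,y) = 0` has a
constant solution in `S` if and only if it is partition regular on `S`. -/
theorem stmt_5 {R : Type*} [CommRing R] [IsDomain R] [Infinite R]
    (S : Set R) (hS : S.Infinite) (m : ℕ) (P : Fin m → MvPolynomial (Fin 2) R)
    (hdeg : ∀ i, 1 ≤ (P i).totalDegree) :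
    (∃ a ∈ S, ∀ i, eval ![a, a] (P i) = 0) ↔
      ∀ (r : ℕ) (c : S → Fin r), ∃ a b : S, c a = c b ∧
        ∀ i, eval ![(a : R), (b : R)] (P i) = 0 := by
  classical
  constructor
  · rintro ⟨a, ha, h⟩ r c
    exact ⟨⟨a, ha⟩, ⟨a, ha⟩, rfl, h⟩
  intro h
  by_contra! hno
  choose i hi using hno
  let D := ∑ j, (P j).totalDegree
  have hD : ∀ j, (P j).totalDegree ≤ D := fun j =>
    Finset.single_le_sum (f := fun j => (P j).totalDegree) (fun _ _ => Nat.zero_le _)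
      (Finset.mem_univ j)
  let q1 : S → Polynomial R := fun a => aeval ![Polynomial.C (a : R), Polynomial.X] (P (i a a.2))
  let q2 : S → Polynomial R := fun a => aeval ![Polynomial.X, Polynomial.C (a : R)] (P (i a a.2))
  have e1 : ∀ (a : S) (b : R), (q1 a).eval b = eval ![(a : R), b] (P (i a a.2)) := by
    intro a b
    simp only [q1, eval_aux]
    congr 2
    ext k; fin_cases k <;> simp
  have e2 : ∀ (a : S) (b : R), (q2 a).eval b = eval ![b, (a : R)] (P (i a a.2)) := by
    intro a b
    simp only [q2, eval_aux]
    congr 2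
    ext k; fin_cases k <;> simp
  have n1 : ∀ a, q1 a ≠ 0 := fun a h0 => hi a a.2 (by rw [← e1, h0]; simp)
  have n2 : ∀ a, q2 a ≠ 0 := fun a h0 => hi a a.2 (by rw [← e2, h0]; simp)
  have d1 : ∀ a, (q1 a).natDegree ≤ D := fun a =>
    (deg_aux _ _ (by intro k; fin_cases k <;> simp)).trans (hD _)
  have d2 : ∀ a, (q2 a).natDegree ≤ D := fun a =>
    (deg_aux _ _ (by intro k; fin_cases k <;> simp)).trans (hD _)
  have cr : ∀ q : Polynomial R, q.roots.toFinset.card ≤ q.natDegree := fun q =>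
    (Multiset.toFinset_card_le _).trans (Polynomial.card_roots' q)
  let F : S → Finset S := fun a =>
    ((q1 a).roots.toFinset ∪ (q2 a).roots.toFinset).subtype (· ∈ S)
  have hF : ∀ a, (F a).card ≤ D + D := by
    intro a
    simp only [F, Finset.card_subtype]
    refine (Finset.card_filter_le _ _).trans ((Finset.card_union_le _ _).trans ?_)
    exact Nat.add_le_add ((cr _).trans (d1 a)) ((cr _).trans (d2 a))
  obtain ⟨c, hc⟩ := greedy_aux_s5 (D + D) F hF
  obtain ⟨a, b, hab, hz⟩ := h _ c
  by_cases hne : a = b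
  · subst hne
    exact hi a a.2 (hz _)
  refine hc a b hne ?_ ?_ hab
  · simp only [F, Finset.mem_subtype, Finset.mem_union, Multiset.mem_toFinset]
    left
    rw [Polynomial.mem_roots (n1 a), Polynomial.IsRoot, e1]
    exact hz _
  · simp only [F, Finset.mem_subtype, Finset.mem_union, Multiset.mem_toFinset]
    right
    rw [Polynomial.mem_roots (n2 b), Polynomial.IsRoot, e2]
    exact hz _
end

section
/- Let P ∈ ℤ[x,y] be an irreducible polynomial in two variables of degree at least 1. If the equation P(x,y) = 0 is infinitely partition regular over the positive integers, then P = x − y or P = y − x (i.e., P is a unit multiple of x − y in ℤ[x,y]). In particular, x − y is the only irreducible infinitely partition regular polynomial in two variables up to sign. -/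
open MvPolynomial

lemma aux_dvd (d : MvPolynomial (Fin 2) ℤ) (g : Fin 2 → MvPolynomial (Fin 2) ℤ)
    (hg : ∀ i, d ∣ X i - g i) (P : MvPolynomial (Fin 2) ℤ) (h0 : aeval g P = 0) : d ∣ P := by
  have h : (Ideal.Quotient.mkₐ ℤ (Ideal.span {d})) =
      (Ideal.Quotient.mkₐ ℤ (Ideal.span {d})).comp (aeval g) := by
    apply MvPolynomial.algHom_ext
    intro i
    simp only [AlgHom.comp_apply, aeval_X, Ideal.Quotient.mkₐ_eq_mk]
    rw [Ideal.Quotient.mk_eq_mk_iff_sub_mem, Ideal.mem_span_singleton]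
    exact hg i
  have h2 := DFunLike.congr_fun h P
  simp only [AlgHom.comp_apply, h0, map_zero, Ideal.Quotient.mkₐ_eq_mk] at h2
  rwa [Ideal.Quotient.eq_zero_iff_mem, Ideal.mem_span_singleton] at h2

lemma aux_assoc (d P : MvPolynomial (Fin 2) ℤ) (hP : Irreducible P) (hd : d ∣ P)
    (hu : ¬ IsUnit d) : P = d ∨ P = -d := by
  obtain ⟨e, he⟩ := hd
  have hue : IsUnit e := (hP.isUnit_or_isUnit he).resolve_left hu
  rw [MvPolynomial.isUnit_iff_eq_C_of_isReduced] at hue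
  obtain ⟨r, hr, rfl⟩ := hue
  rcases Int.isUnit_iff.1 hr with rfl | rfl
  · left; simpa using he
  · right; simpa using he

noncomputable def auxCol (k : ℕ) (N : ℕ → Finset ℕ) (n : ℕ) : Fin (k + 1) :=
  open Classical in
  if h : ∃ x, x ∉ ((N n).filter (· < n)).attach.image (fun m => auxCol k N m.1)
  then h.choose else 0
termination_by n
decreasing_by all_goals exact (Finset.mem_filter.1 m.2).2

lemma auxCol_spec (k : ℕ) (N : ℕ → Finset ℕ) (hN : ∀ n, (N n).card ≤ k) (n m : ℕ)
    (hm : m < n) (hmn : m ∈ N n) : auxCol k N m ≠ auxCol k N n := by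
  classical
  have h : ∃ x, x ∉ ((N n).filter (· < n)).attach.image (fun m => auxCol k N m.1) := by
    by_contra! hc
    have h1 : ((N n).filter (· < n)).attach.image (fun m => auxCol k N m.1) = Finset.univ :=
      Finset.eq_univ_iff_forall.2 hc
    have h2 : (((N n).filter (· < n)).attach.image (fun m => auxCol k N m.1)).card ≤ k :=
      Finset.card_image_le.trans (by
        rw [Finset.card_attach]
        exact (Finset.card_filter_le _ _).trans (hN n))
    rw [h1, Finset.card_univ, Fintype.card_fin] at h2
    omega
  have h3 : auxCol k N n ∉
      ((N n).filter (· < n)).attach.image (fun m => auxCol k N m.1) := by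
    conv in auxCol k N n => rw [auxCol]
    convert h.choose_spec
    rw [dif_pos]
  intro he
  apply h3
  rw [← he]
  exact Finset.mem_image.2 ⟨⟨m, Finset.mem_filter.2 ⟨hmn, hm⟩⟩, Finset.mem_attach _ _, rfl⟩

lemma aux_line (P : MvPolynomial (Fin 2) ℤ) (g : Fin 2 → Polynomial ℤ)
    (hg : ∀ i, (g i).natDegree ≤ 1) (h : aeval g P ≠ 0) :
    ∃ S : Finset ℕ, S.card ≤ P.totalDegree ∧
      ∀ n : ℕ, eval (fun i => (g i).eval (n : ℤ)) P = 0 → n ∈ S := by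
  classical
  refine ⟨(aeval g P).roots.toFinset.image Int.toNat, ?_, ?_⟩
  · refine Finset.card_image_le.trans ((Multiset.toFinset_card_le _).trans
      ((Polynomial.card_roots' _).trans ?_))
    simpa using MvPolynomial.aeval_natDegree_le P le_rfl g hg
  · intro n hn
    refine Finset.mem_image.2 ⟨(n : ℤ), ?_, by simp⟩
    rw [Multiset.mem_toFinset, Polynomial.mem_roots h, Polynomial.IsRoot]
    rw [← hn]
    have : (Polynomial.aeval (n : ℤ)).comp (aeval g) =
        aeval (R := ℤ) (fun i => (g i).eval (n : ℤ)) := by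
      apply MvPolynomial.algHom_ext
      intro i
      simp
    have h2 := DFunLike.congr_fun this P
    simpa [Polynomial.aeval_def, Polynomial.eval₂_eq_eval_map] using h2

lemma aux_back (d P Z : MvPolynomial (Fin 2) ℤ) (g : Fin 2 → Polynomial ℤ)
    (h0 : aeval g P = 0) (hg : ∀ i, d ∣ X i - Polynomial.aeval Z (g i)) : d ∣ P := by
  refine aux_dvd d (fun i => Polynomial.aeval Z (g i)) hg P ?_
  have : (Polynomial.aeval Z).comp (aeval g) =
        aeval (R := ℤ) (fun i => Polynomial.aeval Z (g i)) := by
    apply MvPolynomial.algHom_ext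
    intro i
    simp
  rw [← this, AlgHom.comp_apply, h0, map_zero]

lemma aux_nonunit (d : MvPolynomial (Fin 2) ℤ) (v : Fin 2 → ℤ) (h : eval v d = 0) :
    ¬ IsUnit d := by
  intro hu
  have := hu.map (eval v)
  rw [h] at this
  simp at this

/-- If `P ∈ ℤ[x,y]` is irreducible of degree at least one and the equation `P(x,y) = 0`
is infinitely partition regular over the positive integers, then `P = x - y` or
`P = y - x`. -/
theorem stmt_7 (P : MvPolynomial (Fin 2) ℤ) (hirr : Irreducible P)
    (hdeg : 1 ≤ P.totalDegree)
    (hPR : ∀ (r : ℕ) (c : ℕ → Fin r),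
      {p : ℕ × ℕ | 0 < p.1 ∧ 0 < p.2 ∧ c p.1 = c p.2 ∧
        eval ![(p.1 : ℤ), (p.2 : ℤ)] P = 0}.Infinite) :
    P = X 0 - X 1 ∨ P = X 1 - X 0 := by
  classical
  -- horizontal / vertical lines
  have hcon : ∀ b : ℕ, ¬ ∀ x y : ℕ, eval ![(x : ℤ), (y : ℤ)] P = 0 → x = b ∨ y = b := by
    intro b hb
    refine hPR 2 (fun n => if n = b then 0 else 1) ((Set.finite_singleton (b, b)).subset ?_)
    rintro ⟨x, y⟩ ⟨-, -, hc, he⟩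
    have := hb x y he
    simp only [Set.mem_singleton_iff, Prod.mk.injEq]
    by_cases hx : x = b <;> by_cases hy : y = b <;> simp_all
  have h1 : ∀ b : ℕ, aeval ![Polynomial.X, Polynomial.C (b : ℤ)] P ≠ 0 := by
    intro b h0
    have hd : (X 1 - C (b : ℤ)) ∣ P := by
      refine aux_back _ P (X 0) _ h0 ?_
      intro i
      fin_cases i <;> simp
    apply hcon b
    intro x y he
    right
    rcases aux_assoc _ _ hirr hd (aux_nonunit _ ![0, (b : ℤ)] (by simp)) with h | h <;>
    · rw [h] at he
      simp at he
      omega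
  have h2 : ∀ b : ℕ, aeval ![Polynomial.C (b : ℤ), Polynomial.X] P ≠ 0 := by
    intro b h0
    have hd : (X 0 - C (b : ℤ)) ∣ P := by
      refine aux_back _ P (X 1) _ h0 ?_
      intro i
      fin_cases i <;> simp
    apply hcon b
    intro x y he
    left
    rcases aux_assoc _ _ hirr hd (aux_nonunit _ ![(b : ℤ), 0] (by simp)) with h | h <;>
    · rw [h] at he
      simp at he
      omega
  by_cases h3 : aeval ![(Polynomial.X : Polynomial ℤ), Polynomial.X] P = 0
  · have hd : (X 0 - X 1) ∣ P := by
      refine aux_back _ P (X 0) _ h3 ?_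
      intro i
      fin_cases i
      · simp
      · simpa using (dvd_sub_comm.1 (dvd_refl (X 0 - X 1 : MvPolynomial (Fin 2) ℤ)))
    rcases aux_assoc _ _ hirr hd (aux_nonunit _ ![0, 0] (by simp)) with h | h
    · exact Or.inl h
    · right; rw [h]; ring
  exfalso
  have e1 : ∀ b : ℕ, ∃ S : Finset ℕ, S.card ≤ P.totalDegree ∧
      ∀ n : ℕ, eval ![(n : ℤ), (b : ℤ)] P = 0 → n ∈ S := by
    intro b
    obtain ⟨S, hS, h⟩ := aux_line P _ (by intro i; fin_cases i <;> simp) (h1 b)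
    refine ⟨S, hS, fun n hn => h n ?_⟩
    convert hn using 3
    funext i; fin_cases i <;> simp
  have e2 : ∀ b : ℕ, ∃ S : Finset ℕ, S.card ≤ P.totalDegree ∧
      ∀ n : ℕ, eval ![(b : ℤ), (n : ℤ)] P = 0 → n ∈ S := by
    intro b
    obtain ⟨S, hS, h⟩ := aux_line P _ (by intro i; fin_cases i <;> simp) (h2 b)
    refine ⟨S, hS, fun n hn => h n ?_⟩
    convert hn using 3
    funext i; fin_cases i <;> simp
  obtain ⟨T, -, hT⟩ := aux_line P _ (by intro i; fin_cases i <;> simp) h3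
  choose S1 hS1 hS1' using e1
  choose S2 hS2 hS2' using e2
  have hcol := auxCol_spec (P.totalDegree + P.totalDegree) (fun n => S1 n ∪ S2 n)
    (fun n => (Finset.card_union_le _ _).trans (add_le_add (hS1 n) (hS2 n)))
  refine hPR _ (auxCol (P.totalDegree + P.totalDegree) (fun n => S1 n ∪ S2 n))
    ((T.image (fun n => (n, n))).finite_toSet.subset ?_)
  rintro ⟨x, y⟩ ⟨-, -, hc, he⟩
  simp only at hc he
  rcases lt_trichotomy x y with hlt | rfl | hlt
  · exact absurd hc (hcol y x hlt (Finset.mem_union_left _ (hS1' y x he)))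
  · refine Finset.mem_coe.2 (Finset.mem_image.2 ⟨x, hT x ?_, rfl⟩)
    convert he using 3
    funext i; fin_cases i <;> simp
  · exact absurd hc.symm (hcol x y hlt (Finset.mem_union_right _ (hS2' x y he)))
end

section
/- Let Γ be a finitely generated subgroup of the multiplicative group ℂˣ of nonzero complex numbers, and let a, b, c be nonzero complex numbers. The equation a·x + b·y + c·z = 0 is partition regular over Γ if and only if a + b + c = 0 (equivalently, if and only if the equation admits a constant solution x = y = z in Γ). -/
theorem aux_jac : IsJacobsonRing ℤ := by
  rw [isJacobsonRing_iff_prime_eq]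
  intro P hP
  by_cases h : P = ⊥
  · subst h
    rw [eq_bot_iff]
    intro x hx
    have := Ideal.mem_jacobson_bot.1 hx (3 * x)
    rw [Ideal.mem_bot]
    rcases Int.isUnit_iff.1 this with h | h
    · nlinarith
    · nlinarith [mul_self_nonneg x]
  · have := hP.isMaximal h
    exact Ideal.jacobson_eq_self_of_isMaximal

theorem aux_finite_field (K : Type) [Field K] [i : Algebra ℤ K] [Algebra.FiniteType ℤ K] : Finite K := by
  have hJ := aux_jac
  obtain rfl : i = Ring.toIntAlgebra K := Subsingleton.elim _ _
  have h : Module.Finite ℤ K := finite_of_finite_type_of_isJacobsonRing ℤ K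
  have hi : Algebra.IsIntegral ℤ K := inferInstance
  have hn : ¬ Function.Injective (algebraMap ℤ K) := by
    intro hinj
    have := isField_of_isIntegral_of_isField (R := ℤ) (S := K) hinj (Field.toIsField K)
    exact Int.not_isField this
  rw [injective_iff_map_eq_zero] at hn
  push Not at hn
  obtain ⟨n, hn0, hn1⟩ := hn
  apply Module.finite_of_fg_torsion K
  intro x
  refine ⟨⟨n, mem_nonZeroDivisors_of_ne_zero hn1⟩, ?_⟩
  change n • x = 0
  rw [Algebra.smul_def, hn0, zero_mul]

/-- For a finitely generated multiplicative subgroup `Γ` of `ℂˣ` and nonzero complex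
numbers `a`, `b`, `c`, the equation `a·x + b·y + c·z = 0` is partition regular over `Γ`
if and only if `a + b + c = 0`. -/
theorem stmt_9 (Γ : Subgroup ℂˣ) (hΓ : Γ.FG) (a b c : ℂ)
    (ha : a ≠ 0) (hb : b ≠ 0) (hc : c ≠ 0) :
    (∀ (r : ℕ) (col : Γ → Fin r), ∃ x y z : Γ,
        col x = col y ∧ col y = col z ∧
        a * ((x : ℂˣ) : ℂ) + b * ((y : ℂˣ) : ℂ) + c * ((z : ℂˣ) : ℂ) = 0) ↔
      a + b + c = 0 := by
  constructor
  · intro hPR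
    by_contra hs
    obtain ⟨S, hS⟩ := hΓ
    classical
    let T : Finset ℂ := S.image (fun u : ℂˣ => (u : ℂ)) ∪ S.image (fun u : ℂˣ => ((u⁻¹ : ℂˣ) : ℂ))
      ∪ {a, b, c, (a + b + c)⁻¹}
    let A : Subalgebra ℤ ℂ := Algebra.adjoin ℤ (T : Set ℂ)
    have hT : ∀ t ∈ T, t ∈ A := fun t ht => Algebra.subset_adjoin ht
    have hA : Algebra.FiniteType ℤ A :=
      (Subalgebra.fg_iff_finiteType A).1 ⟨T, rfl⟩
    have hG : ∀ x ∈ Γ, (x : ℂ) ∈ A ∧ ((x⁻¹ : ℂˣ) : ℂ) ∈ A := by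
      intro x hx
      rw [← hS] at hx
      induction hx using Subgroup.closure_induction with
      | mem x hx =>
        constructor
        · apply hT
          simp only [T, Finset.mem_union, Finset.mem_image]
          exact Or.inl (Or.inl ⟨x, hx, rfl⟩)
        · apply hT
          simp only [T, Finset.mem_union, Finset.mem_image]
          exact Or.inl (Or.inr ⟨x, hx, rfl⟩)
      | one => simp [one_mem]
      | mul x y _ _ h1 h2 =>
        rw [mul_inv, Units.val_mul, Units.val_mul]
        exact ⟨mul_mem h1.1 h2.1, mul_mem h1.2 h2.2⟩
      | inv x _ h => rw [inv_inv]; exact ⟨h.2, h.1⟩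
    obtain ⟨m, hm⟩ := Ideal.exists_maximal A
    let _ : Field (A ⧸ m) := Ideal.Quotient.field m
    have hK : Algebra.FiniteType ℤ (A ⧸ m) :=
      Algebra.FiniteType.of_surjective (Ideal.Quotient.mkₐ ℤ m) (Ideal.Quotient.mkₐ_surjective ℤ m)
    have hF : Finite (A ⧸ m) := aux_finite_field _
    let q := Ideal.Quotient.mk m
    let f : Γ → A := fun x => ⟨((x : ℂˣ) : ℂ), (hG x x.2).1⟩
    obtain ⟨n, ⟨e⟩⟩ := Finite.exists_equiv_fin (A ⧸ m)
    obtain ⟨x, y, z, hxy, hyz, heq⟩ := hPR n (fun x => e (q (f x)))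
    have hxy := e.injective hxy
    have hyz := e.injective hyz
    let a' : A := ⟨a, hT a (by simp [T])⟩
    let b' : A := ⟨b, hT b (by simp [T])⟩
    let c' : A := ⟨c, hT c (by simp [T])⟩
    let d' : A := ⟨(a + b + c)⁻¹, hT _ (by simp [T])⟩
    let w' : A := ⟨_, (hG z z.2).2⟩
    have h1 : a' * f x + b' * f y + c' * f z = 0 := Subtype.ext heq
    have h2 : d' * (a' + b' + c') = 1 := Subtype.ext (inv_mul_cancel₀ hs)
    have h3 : w' * f z = 1 := Subtype.ext (Units.inv_mul (z : ℂˣ))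
    have h1' := congrArg q h1
    have h2' := congrArg q h2
    have h3' := congrArg q h3
    simp only [map_add, map_mul, map_one, map_zero] at h1' h2' h3'
    rw [hxy, hyz] at h1'
    have : (1 : A ⧸ m) = 0 := by
      linear_combination (q d' * q w') * h1' - q w' * q (f z) * h2' - h3'
    exact one_ne_zero this
  · intro h r col
    refine ⟨1, 1, 1, rfl, rfl, ?_⟩
    simpa using h
end

section
/- Let Γ be a finitely generated subgroup of the multiplicative group ℂˣ of nonzero complex numbers. Then there exist r ∈ ℕ and a coloring c : Γ → {1,…,r} such that every c-monochromatic triple x, y, z ∈ Γ satisfying x + z = 2y (in ℂ) has x = y = z. In particular, Γ contains no nonconstant monochromatic 3-term arithmetic progression for this coloring. -/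
structure HS (K ι : Type) [Field K] [Fintype ι] where
  abv : ι → AbsoluteValue K ℝ
  w : ι → ℝ
  w_nn : ∀ i, 0 ≤ w i
  arch : ι → Bool
  emb : ∀ i, arch i = true → ∃ σ : K →+* ℂ, ∀ x, abv i x = ‖σ x‖
  na : ∀ i, arch i = false → ∀ x y, abv i (x + y) ≤ max (abv i x) (abv i y)
  wsum : ∑ i, w i * (if arch i then 1 else 0) = 1
  R : Subring K
  pf : ∀ x ∈ R, x ≠ 0 → 0 ≤ ∑ i, w i * Real.log (abv i x)

set_option linter.unusedSectionVars false

namespace HS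
variable {K ι : Type} [Field K] [CharZero K] [Fintype ι] (H : HS K ι)

noncomputable def lg (i : ι) (x : K) : ℝ := Real.log (H.abv i x)

noncomputable def e (i : ι) : ℝ := if H.arch i then 1 else 0

lemma e_nn (i : ι) : 0 ≤ H.e i := by unfold e; split_ifs <;> norm_num

lemma lg_mul (i : ι) {x y : K} (hx : x ≠ 0) (hy : y ≠ 0) :
    H.lg i (x * y) = H.lg i x + H.lg i y := by
  unfold lg
  rw [map_mul, Real.log_mul] <;> simpa

lemma lg_inv (i : ι) (x : K) : H.lg i x⁻¹ = - H.lg i x := by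
  unfold lg
  rw [map_inv₀, Real.log_inv]

lemma lg_neg (i : ι) (x : K) : H.lg i (-x) = H.lg i x := by
  unfold lg
  rw [AbsoluteValue.map_neg]

lemma lg_add (i : ι) {x y : K} (hx : x ≠ 0) (hy : y ≠ 0) (hxy : x + y ≠ 0) :
    H.lg i (x + y) ≤ H.e i * Real.log 2 + max (H.lg i x) (H.lg i y) := by
  have px : 0 < H.abv i x := (H.abv i).pos hx
  have py : 0 < H.abv i y := (H.abv i).pos hy
  have pxy : 0 < H.abv i (x + y) := (H.abv i).pos hxy
  have hm : max (H.lg i x) (H.lg i y) = Real.log (max (H.abv i x) (H.abv i y)) := by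
    unfold lg
    rcases le_total (H.abv i x) (H.abv i y) with h | h
    · rw [max_eq_right h, max_eq_right (Real.log_le_log px h)]
    · rw [max_eq_left h, max_eq_left (Real.log_le_log py h)]
  have pm : 0 < max (H.abv i x) (H.abv i y) := lt_max_of_lt_left px
  rw [hm]
  unfold e lg
  cases h : H.arch i
  · simp only [Bool.false_eq_true, if_false, zero_mul, zero_add]
    exact Real.log_le_log pxy (H.na i h x y)
  · simp only [if_true, one_mul]
    rw [← Real.log_mul (by norm_num) pm.ne']
    apply Real.log_le_log pxy
    have := (H.abv i).add_le x y
    have := le_max_left (H.abv i x) (H.abv i y)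
    have := le_max_right (H.abv i x) (H.abv i y)
    linarith

lemma lg_two_arch (i : ι) (h : H.arch i = true) : H.lg i 2 = Real.log 2 := by
  obtain ⟨σ, hσ⟩ := H.emb i h
  unfold lg
  rw [hσ, map_ofNat σ 2]; simp

lemma lg_two_na (i : ι) (h : H.arch i = false) : H.lg i 2 ≤ 0 := by
  unfold lg
  apply Real.log_nonpos (AbsoluteValue.nonneg _ _)
  have := H.na i h 1 1
  rw [map_one, max_self] at this
  norm_num at this
  exact this

lemma sum_k : ∑ i, H.w i * (H.e i * Real.log 2 + |H.lg i 2|) ≤ 3 * Real.log 2 := by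
  have h2 := H.pf 2 (by exact_mod_cast natCast_mem H.R 2) (by norm_num)
  have key : ∀ i, H.w i * (H.e i * Real.log 2 + |H.lg i 2|) =
      3 * Real.log 2 * (H.w i * H.e i) - H.w i * H.lg i 2 := by
    intro i
    cases h : H.arch i
    · have := H.lg_two_na i h
      rw [abs_of_nonpos this]; simp [e, h]
    · rw [H.lg_two_arch i h, abs_of_nonneg (Real.log_nonneg (by norm_num))]; simp [e, h]; ring
  have hw : ∑ i, H.w i * H.e i = 1 := H.wsum
  simp_rw [key]
  rw [Finset.sum_sub_distrib, ← Finset.mul_sum, hw]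
  change 0 ≤ ∑ i, H.w i * H.lg i 2 at h2
  linarith

lemma sum_unit {x : K} (h0 : x ≠ 0) (hx : x ∈ H.R) (hx' : x⁻¹ ∈ H.R) :
    ∑ i, H.w i * H.lg i x = 0 := by
  have h1 := H.pf x hx h0
  have h2 := H.pf x⁻¹ hx' (inv_ne_zero h0)
  change 0 ≤ ∑ i, H.w i * H.lg i x at h1
  change 0 ≤ ∑ i, H.w i * H.lg i x⁻¹ at h2
  simp_rw [lg_inv, mul_neg, Finset.sum_neg_distrib] at h2
  linarith

lemma point {a b k t α β d a2 b2 : ℝ} (hk : 0 ≤ k) (h : 0 ≤ k + max a b)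
    (ht1 : 1 ≤ t) (ht2 : t ≤ 3/2) (hα : |a2 - t * a| = α) (hβ : |b2 - t * b| = β)
    (d1 : d ≤ k + max a a2) (d2 : d ≤ k + max b b2) :
    d ≤ 2 * k + (α + β) + 7/8 * (a + b) - 1/8 * (|a| + |b|) := by
  have A : max a a2 ≤ α + max a (3/2 * a) := by
    have := abs_le.1 hα.le
    rcases le_total 0 a with ha | ha
    · apply max_le
      · have := le_max_left a (3/2*a); have := abs_nonneg (a2 - t*a); linarith
      · have := le_max_right a (3/2*a); nlinarith
    · apply max_le
      · have := le_max_left a (3/2*a); have := abs_nonneg (a2 - t*a); linarith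
      · have := le_max_left a (3/2*a); nlinarith
  have B : max b b2 ≤ β + max b (3/2 * b) := by
    have := abs_le.1 hβ.le
    rcases le_total 0 b with ha | ha
    · apply max_le
      · have := le_max_left b (3/2*b); have := abs_nonneg (b2 - t*b); linarith
      · have := le_max_right b (3/2*b); nlinarith
    · apply max_le
      · have := le_max_left b (3/2*b); have := abs_nonneg (b2 - t*b); linarith
      · have := le_max_left b (3/2*b); nlinarith
  have hα0 : 0 ≤ α := hα ▸ abs_nonneg _
  have hβ0 : 0 ≤ β := hβ ▸ abs_nonneg _
  have D1 : d ≤ k + (α + max a (3/2 * a)) := by linarith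
  have D2 : d ≤ k + (β + max b (3/2 * b)) := by linarith
  clear A B d1 d2 hα hβ
  rcases le_total 0 a with ha | ha <;> rcases le_total 0 b with hb | hb
  · rw [abs_of_nonneg ha, abs_of_nonneg hb]
    rw [max_eq_right (by linarith)] at D1 D2
    linarith
  · rw [abs_of_nonneg ha, abs_of_nonpos hb]
    rw [max_eq_left (by linarith)] at D2
    linarith
  · rw [abs_of_nonpos ha, abs_of_nonneg hb]
    rw [max_eq_left (by linarith)] at D1
    linarith
  · rw [abs_of_nonpos ha, abs_of_nonpos hb]
    rw [max_eq_left (by linarith)] at D1 D2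
    rcases le_total a b with hab | hab
    · rw [max_eq_right hab] at h; linarith
    · rw [max_eq_left hab] at h; linarith

lemma gap {u1 v1 u2 v2 : K} (hu1 : u1 ≠ 0) (hv1 : v1 ≠ 0) (hu2 : u2 ≠ 0) (hv2 : v2 ≠ 0)
    (ru1 : u1 ∈ H.R) (rv1 : v1 ∈ H.R) (ru1' : u1⁻¹ ∈ H.R) (rv1' : v1⁻¹ ∈ H.R) (ru2 : u2 ∈ H.R)
    (h1 : u1 + v1 = 2) (h2 : u2 + v2 = 2) (hne : u1 ≠ u2) (t : ℝ) (ht1 : 1 ≤ t) (ht2 : t ≤ 3/2) :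
    1/8 * ∑ i, H.w i * (|H.lg i u1| + |H.lg i v1|) ≤ 6 * Real.log 2 +
      ∑ i, H.w i * (|H.lg i u2 - t * H.lg i u1| + |H.lg i v2 - t * H.lg i v1|) := by
  have hd : u1 - u2 ≠ 0 := sub_ne_zero.2 hne
  have hd' : u1 - u2 = v2 - v1 := by linear_combination h1 - h2
  have p := H.pf (u1 - u2) (H.R.sub_mem ru1 ru2) hd
  change 0 ≤ ∑ i, H.w i * H.lg i (u1 - u2) at p
  have su := H.sum_unit hu1 ru1 ru1'
  have sv := H.sum_unit hv1 rv1 rv1'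
  have sk := H.sum_k
  have l2 : 0 ≤ Real.log 2 := Real.log_nonneg (by norm_num)
  have two : (2:K) ≠ 0 := by norm_num
  have key : ∀ i, H.lg i (u1 - u2) ≤ 2 * (H.e i * Real.log 2 + |H.lg i 2|) +
      (|H.lg i u2 - t * H.lg i u1| + |H.lg i v2 - t * H.lg i v1|) +
      7/8 * (H.lg i u1 + H.lg i v1) - 1/8 * (|H.lg i u1| + |H.lg i v1|) := by
    intro i
    have he : 0 ≤ H.e i * Real.log 2 := mul_nonneg (H.e_nn i) l2
    have hc := abs_nonneg (H.lg i 2)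
    have hc1 := le_abs_self (H.lg i 2)
    have hc2 := neg_abs_le (H.lg i 2)
    refine point (k := H.e i * Real.log 2 + |H.lg i 2|) (by positivity) ?_ ht1 ht2 rfl rfl
      (a2 := H.lg i u2) (b2 := H.lg i v2) ?_ ?_
    · have := H.lg_add i hu1 hv1 (by rw [h1]; exact two)
      rw [h1] at this
      linarith
    · have := H.lg_add i (x := u1) (y := -u2) hu1 (neg_ne_zero.2 hu2)
        (by rwa [← sub_eq_add_neg])
      rw [← sub_eq_add_neg, lg_neg] at this
      linarith
    · have := H.lg_add i (x := v2) (y := -v1) hv2 (neg_ne_zero.2 hv1)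
        (by rwa [← sub_eq_add_neg, ← hd'])
      rw [← sub_eq_add_neg, lg_neg, ← hd', max_comm] at this
      linarith
  have S := Finset.sum_le_sum (s := Finset.univ) fun i _ => mul_le_mul_of_nonneg_left (key i) (H.w_nn i)
  have E : ∀ i, H.w i * (2 * (H.e i * Real.log 2 + |H.lg i 2|) +
      (|H.lg i u2 - t * H.lg i u1| + |H.lg i v2 - t * H.lg i v1|) +
      7/8 * (H.lg i u1 + H.lg i v1) - 1/8 * (|H.lg i u1| + |H.lg i v1|)) =
      2 * (H.w i * (H.e i * Real.log 2 + |H.lg i 2|)) +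
      H.w i * (|H.lg i u2 - t * H.lg i u1| + |H.lg i v2 - t * H.lg i v1|) +
      7/8 * (H.w i * H.lg i u1 + H.w i * H.lg i v1)
      - 1/8 * (H.w i * (|H.lg i u1| + |H.lg i v1|)) := by intro i; ring
  simp_rw [E] at S
  rw [Finset.sum_sub_distrib, Finset.sum_add_distrib, Finset.sum_add_distrib, ← Finset.mul_sum,
    ← Finset.mul_sum, ← Finset.mul_sum, Finset.sum_add_distrib, su, sv] at S
  linarith

lemma log_abs_le {r : ℝ} (hr : 0 < r) : r ≤ Real.exp |Real.log r| := by
  nth_rw 1 [← Real.exp_log hr]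
  exact Real.exp_le_exp.2 (le_abs_self _)

/-- complex estimate -/
lemma conj_close {z : ℂ} (hz : z ≠ 0) {s : ℝ} (hs : |Real.log ‖z‖| ≤ s) (hs1 : s ≤ 1/100) :
    ‖z⁻¹ - (starRingEnd ℂ) z‖ ≤ 1/40 ∧ ‖z⁻¹ - 1‖ ≤ 2.1 ∧ ‖(starRingEnd ℂ) z - 1‖ ≤ 2.1 := by
  have hp : 0 < ‖z‖ := norm_pos_iff.2 hz
  have e1 : Real.exp (1/100) ≤ 1.0102 := by
    have := Real.exp_bound' (x := 1/100) (by norm_num) (by norm_num) (n := 2) (by norm_num)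
    refine this.trans ?_
    norm_num [Finset.sum_range_succ, Nat.factorial]
  have b1 : ‖z‖ ≤ 1.0102 := (log_abs_le hp).trans
    ((Real.exp_le_exp.2 (hs.trans hs1)).trans e1)
  have b2 : ‖z‖⁻¹ ≤ 1.0102 := by
    have := log_abs_le (inv_pos.2 hp)
    rw [Real.log_inv, abs_neg] at this
    exact this.trans ((Real.exp_le_exp.2 (hs.trans hs1)).trans e1)
  have hi : ‖z‖ * ‖z‖⁻¹ = 1 := mul_inv_cancel₀ hp.ne'
  refine ⟨?_, ?_, ?_⟩
  · have : z⁻¹ - (starRingEnd ℂ) z = z⁻¹ * ((1 - ‖z‖^2 : ℝ) : ℂ) := by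
      push_cast
      rw [← Complex.mul_conj']
      field_simp
    rw [this, norm_mul, norm_inv, Complex.norm_real, Real.norm_eq_abs]
    have hq : ‖z‖⁻¹ * |1 - ‖z‖^2| = |‖z‖⁻¹ - ‖z‖| := by
      rw [← abs_of_pos (inv_pos.2 hp), ← abs_mul, abs_of_pos (inv_pos.2 hp)]
      congr 1
      field_simp
    rw [hq, abs_le]
    have : 0 < ‖z‖⁻¹ := inv_pos.2 hp
    constructor <;> nlinarith
  · refine (norm_sub_le _ _).trans ?_
    rw [norm_inv, norm_one]; linarith
  · refine (norm_sub_le _ _).trans ?_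
    rw [RCLike.norm_conj, norm_one]; linarith

lemma arch_small {x y x' y' : ℂ} (hx : x ≠ 0) (hy : y ≠ 0) (hx' : x' ≠ 0) (hy' : y' ≠ 0)
    (hf : (x - 1) * (y' - 1) = (x' - 1) * (y - 1)) {s : ℝ} (hs : s ≤ 1/100)
    (h1 : |Real.log ‖x‖| ≤ s) (h2 : |Real.log ‖y‖| ≤ s) (h3 : |Real.log ‖x'‖| ≤ s)
    (h4 : |Real.log ‖y'‖| ≤ s) :
    ‖(x⁻¹ - 1) * (y'⁻¹ - 1) - (x'⁻¹ - 1) * (y⁻¹ - 1)‖ ≤ 1/4 := by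
  obtain ⟨a1, b1, c1⟩ := conj_close hx h1 hs
  obtain ⟨a2, b2, c2⟩ := conj_close hy h2 hs
  obtain ⟨a3, b3, c3⟩ := conj_close hx' h3 hs
  obtain ⟨a4, b4, c4⟩ := conj_close hy' h4 hs
  have hf' := congrArg (starRingEnd ℂ) hf
  simp only [map_mul, map_sub, map_one] at hf'
  have : (x⁻¹ - 1) * (y'⁻¹ - 1) - (x'⁻¹ - 1) * (y⁻¹ - 1) =
     ((x⁻¹ - (starRingEnd ℂ) x) * (y'⁻¹ - 1) + ((starRingEnd ℂ) x - 1) * (y'⁻¹ - (starRingEnd ℂ) y'))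
     - ((x'⁻¹ - (starRingEnd ℂ) x') * (y⁻¹ - 1) +
      ((starRingEnd ℂ) x' - 1) * (y⁻¹ - (starRingEnd ℂ) y)) := by
    linear_combination hf'
  rw [this]
  have m : ∀ p q : ℂ, ‖p‖ ≤ 1/40 → ‖q‖ ≤ 2.1 → ‖p * q‖ ≤ 2.1/40 := by
    intro p q hp hq
    rw [norm_mul]
    calc _ ≤ (1/40 : ℝ) * 2.1 := mul_le_mul hp hq (norm_nonneg _) (by norm_num)
      _ = _ := by norm_num
  have m1 := m _ _ a1 b4
  have m2 := m _ _ a4 c1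
  have m3 := m _ _ a3 b2
  have m4 := m _ _ a2 c3
  rw [mul_comm] at m2 m4
  refine (norm_sub_le _ _).trans ?_
  have := norm_add_le ((x⁻¹ - (starRingEnd ℂ) x) * (y'⁻¹ - 1))
    (((starRingEnd ℂ) x - 1) * (y'⁻¹ - (starRingEnd ℂ) y'))
  have := norm_add_le ((x'⁻¹ - (starRingEnd ℂ) x') * (y⁻¹ - 1))
      (((starRingEnd ℂ) x' - 1) * (y⁻¹ - (starRingEnd ℂ) y))
  norm_num at *
  linarith

lemma cluster_G {x y x' y' : K} (hx : x ≠ 0) (hy : y ≠ 0) (hx' : x' ≠ 0) (hy' : y' ≠ 0)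
    (hf : (x - 1) * (y' - 1) = (x' - 1) * (y - 1))
    (rx : x⁻¹ ∈ H.R) (ry : y⁻¹ ∈ H.R) (rx' : x'⁻¹ ∈ H.R) (ry' : y'⁻¹ ∈ H.R)
    (hs : 401 * ∑ i, H.w i * (|H.lg i x| + |H.lg i y| + |H.lg i x'| + |H.lg i y'|) < 1) :
    (x⁻¹ - 1) * (y'⁻¹ - 1) = (x'⁻¹ - 1) * (y⁻¹ - 1) := by
  by_contra hne
  have hG := sub_ne_zero.2 hne
  set G := (x⁻¹ - 1) * (y'⁻¹ - 1) - (x'⁻¹ - 1) * (y⁻¹ - 1) with hGdef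
  have p := H.pf G (H.R.sub_mem (H.R.mul_mem (H.R.sub_mem rx H.R.one_mem) (H.R.sub_mem ry' H.R.one_mem))
    (H.R.mul_mem (H.R.sub_mem rx' H.R.one_mem) (H.R.sub_mem ry H.R.one_mem))) hG
  change 0 ≤ ∑ i, H.w i * H.lg i G at p
  have key : ∀ i, H.lg i G ≤ - H.e i +
      401 * (|H.lg i x| + |H.lg i y| + |H.lg i x'| + |H.lg i y'|) := by
    intro i
    have pG : 0 < H.abv i G := (H.abv i).pos hG
    have q1 := abs_nonneg (H.lg i x)
    have q2 := abs_nonneg (H.lg i y)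
    have q3 := abs_nonneg (H.lg i x')
    have q4 := abs_nonneg (H.lg i y')
    set s := |H.lg i x| + |H.lg i y| + |H.lg i x'| + |H.lg i y'| with hsdef
    have hinv : ∀ z : K, z ≠ 0 → H.abv i z⁻¹ ≤ Real.exp |H.lg i z| := by
      intro z hz
      have := log_abs_le ((H.abv i).pos (inv_ne_zero hz))
      change _ ≤ Real.exp |H.lg i z⁻¹| at this
      rwa [lg_inv, abs_neg] at this
    have hone : ∀ z : K, 1 ≤ Real.exp |H.lg i z| := fun z => Real.one_le_exp (abs_nonneg _)
    cases h : H.arch i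
    · simp only [e, h]
      have hm : ∀ z : K, z ≠ 0 → H.abv i (z⁻¹ - 1) ≤ Real.exp |H.lg i z| := by
        intro z hz
        have := H.na i h z⁻¹ (-1)
        rw [← sub_eq_add_neg, AbsoluteValue.map_neg, map_one] at this
        exact this.trans (max_le (hinv z hz) (hone z))
      have hmm : ∀ z z' : K, z ≠ 0 → z' ≠ 0 → |H.lg i z| + |H.lg i z'| ≤ s →
          H.abv i ((z⁻¹ - 1) * (z'⁻¹ - 1)) ≤ Real.exp s := by
        intro z z' hz hz' hl
        rw [map_mul]
        refine (mul_le_mul (hm z hz) (hm z' hz') (AbsoluteValue.nonneg _ _)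
          (Real.exp_pos _).le).trans ?_
        rw [← Real.exp_add]
        exact Real.exp_le_exp.2 hl
      have : H.abv i G ≤ Real.exp s := by
        have := H.na i h ((x⁻¹ - 1) * (y'⁻¹ - 1)) (-((x'⁻¹ - 1) * (y⁻¹ - 1)))
        rw [← sub_eq_add_neg, AbsoluteValue.map_neg] at this
        exact this.trans (max_le (hmm x y' hx hy' (by linarith)) (hmm x' y hx' hy (by linarith)))
      have h2 := Real.log_le_log pG this
      rw [Real.log_exp] at h2
      change H.lg i G ≤ s at h2
      simp only [Bool.false_eq_true, if_false]
      linarith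
    · simp only [e, h, if_true]
      obtain ⟨σ, hσ⟩ := H.emb i h
      by_cases hsm : s ≤ 1/100
      · have hlg : ∀ z, H.lg i z = Real.log ‖σ z‖ := fun z => by rw [← hσ]; rfl
        have nz : ∀ z, z ≠ 0 → σ z ≠ 0 := fun z hz => (map_ne_zero σ).2 hz
        have hf' := congrArg σ hf
        simp only [map_mul, map_sub, map_one] at hf'
        have := arch_small (nz x hx) (nz y hy) (nz x' hx') (nz y' hy') hf' hsm
          (by rw [← hlg]; linarith) (by rw [← hlg]; linarith)
          (by rw [← hlg]; linarith) (by rw [← hlg]; linarith)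
        have hG2 : H.abv i G ≤ 1/4 := by
          rw [hσ, hGdef]
          simpa only [map_mul, map_sub, map_one, map_inv₀] using this
        have : H.abv i G ≤ Real.exp (-1) := by
          refine hG2.trans ?_
          rw [Real.exp_neg, one_div]
          have := Real.exp_one_lt_d9
          apply inv_anti₀ (Real.exp_pos _)
          linarith
        have h2 := Real.log_le_log pG this
        rw [Real.log_exp] at h2
        change H.lg i G ≤ -1 at h2
        linarith
      · have hm : ∀ z : K, z ≠ 0 → H.abv i (z⁻¹ - 1) ≤ 2 * Real.exp |H.lg i z| := by
          intro z hz
          have := (H.abv i).add_le z⁻¹ (-1)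
          rw [← sub_eq_add_neg, AbsoluteValue.map_neg, map_one] at this
          have := hinv z hz
          have := hone z
          linarith
        have hmm : ∀ z z' : K, z ≠ 0 → z' ≠ 0 → |H.lg i z| + |H.lg i z'| ≤ s →
            H.abv i ((z⁻¹ - 1) * (z'⁻¹ - 1)) ≤ 4 * Real.exp s := by
          intro z z' hz hz' hl
          rw [map_mul]
          refine (mul_le_mul (hm z hz) (hm z' hz') (AbsoluteValue.nonneg _ _)
            (by positivity)).trans ?_
          have := Real.exp_le_exp.2 hl
          rw [Real.exp_add] at this
          linarith
        have : H.abv i G ≤ Real.exp (s + 3) := by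
          have := (H.abv i).add_le ((x⁻¹ - 1) * (y'⁻¹ - 1)) (-((x'⁻¹ - 1) * (y⁻¹ - 1)))
          rw [← sub_eq_add_neg, AbsoluteValue.map_neg] at this
          have h1 := hmm x y' hx hy' (by linarith)
          have h2 := hmm x' y hx' hy (by linarith)
          rw [Real.exp_add]
          have h3 : (8:ℝ) ≤ Real.exp 3 := by
            have := Real.exp_one_gt_d9
            have e3 : Real.exp 3 = Real.exp 1 ^ 3 := by rw [← Real.exp_nat_mul]; norm_num
            rw [e3]
            calc (8:ℝ) = 2^3 := by norm_num
              _ ≤ _ := by gcongr; linarith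
          have := Real.exp_pos s
          nlinarith
        have h2 := Real.log_le_log pG this
        rw [Real.log_exp] at h2
        change H.lg i G ≤ s + 3 at h2
        push Not at hsm
        linarith
  have S := Finset.sum_le_sum (s := Finset.univ) fun i _ => mul_le_mul_of_nonneg_left (key i) (H.w_nn i)
  have hw : ∑ i, H.w i * H.e i = 1 := H.wsum
  have E : ∀ i, H.w i * (- H.e i +
      401 * (|H.lg i x| + |H.lg i y| + |H.lg i x'| + |H.lg i y'|)) = - (H.w i * H.e i) +
      401 * (H.w i * (|H.lg i x| + |H.lg i y| + |H.lg i x'| + |H.lg i y'|)) := by intro i; ring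
  simp_rw [E] at S
  rw [Finset.sum_add_distrib, Finset.sum_neg_distrib, hw, ← Finset.mul_sum] at S
  linarith

lemma cluster_alg {u1 v1 u2 v2 u3 v3 : K} (a1 : u1 ≠ 0) (b1 : v1 ≠ 0) (a2 : u2 ≠ 0) (b2 : v2 ≠ 0)
    (a3 : u3 ≠ 0) (b3 : v3 ≠ 0) (h1 : u1 + v1 = 2) (h2 : u2 + v2 = 2) (h3 : u3 + v3 = 2)
    (n12 : u1 ≠ u2) (n13 : u1 ≠ u3) (n23 : u2 ≠ u3) :
    (u2/u1 - 1) * (v3/v1 - 1) = (u3/u1 - 1) * (v2/v1 - 1) ∧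
    ((u2/u1)⁻¹ - 1) * ((v3/v1)⁻¹ - 1) ≠ ((u3/u1)⁻¹ - 1) * ((v2/v1)⁻¹ - 1) := by
  have e1 : v1 = 2 - u1 := by linear_combination h1
  have e2 : v2 = 2 - u2 := by linear_combination h2
  have e3 : v3 = 2 - u3 := by linear_combination h3
  constructor
  · field_simp
    rw [e1, e2, e3]; ring
  · intro h
    rw [inv_div, inv_div, inv_div, inv_div] at h
    have n1 := sub_ne_zero.2 n12
    have n2 := sub_ne_zero.2 n13
    have n3 := sub_ne_zero.2 n23
    field_simp at h
    have h' : (u1 - u2) * (u1 - u3) * (u2 - u3) * 2 = 0 := by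
      rw [e1, e2, e3] at h
      linear_combination h
    simp [n1, n2, n3] at h'

end HS

open MeasureTheory Metric Module in
lemma card_sep {E : Type} [NormedAddCommGroup E] [NormedSpace ℝ E] [FiniteDimensional ℝ E]
    (r : ℝ) (hr : 0 ≤ r) (s : Finset E) (hs : ∀ c ∈ s, ‖c‖ ≤ r)
    (h : ∀ c ∈ s, ∀ d ∈ s, c ≠ d → 1/2 ≤ ‖c - d‖) : (s.card : ℝ) ≤ (4 * r + 1) ^ finrank ℝ E := by
  borelize E
  let μ : Measure E := Measure.addHaar
  let δ : ℝ := (1 : ℝ) / 4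
  let ρ : ℝ := r + 1 / 4
  have ρpos : 0 < ρ := by positivity
  set A := ⋃ c ∈ s, ball (c : E) δ with hA
  have D : Set.Pairwise (s : Set E) (Function.onFun Disjoint fun c => ball (c : E) δ) := by
    rintro c hc d hd hcd
    apply ball_disjoint_ball
    rw [dist_eq_norm]
    have := h c hc d hd hcd
    simp only [δ]; linarith
  have A_subset : A ⊆ ball (0 : E) ρ := by
    refine Set.iUnion₂_subset fun x hx => ?_
    apply ball_subset_ball'
    rw [dist_zero_right]
    have := hs x hx
    simp only [δ, ρ]; linarith
  have I :
    (s.card : ENNReal) * ENNReal.ofReal (δ ^ finrank ℝ E) * μ (ball 0 1) ≤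
      ENNReal.ofReal (ρ ^ finrank ℝ E) * μ (ball 0 1) :=
    calc
      (s.card : ENNReal) * ENNReal.ofReal (δ ^ finrank ℝ E) * μ (ball 0 1) = μ A := by
        rw [hA, measure_biUnion_finset D fun c _ => measurableSet_ball]
        have I : 0 < δ := by norm_num [δ]
        simp only [μ.addHaar_ball_of_pos _ I]
        simp only [Finset.sum_const, nsmul_eq_mul, mul_assoc]
      _ ≤ μ (ball (0 : E) ρ) := measure_mono A_subset
      _ = ENNReal.ofReal (ρ ^ finrank ℝ E) * μ (ball 0 1) := by
        simp only [μ.addHaar_ball_of_pos _ ρpos]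
  have J : (s.card : ENNReal) * ENNReal.ofReal (δ ^ finrank ℝ E) ≤ ENNReal.ofReal (ρ ^ finrank ℝ E) :=
    (ENNReal.mul_le_mul_iff_left (measure_ball_pos _ _ zero_lt_one).ne' measure_ball_lt_top.ne).1 I
  have K := ENNReal.toReal_le_of_le_ofReal (pow_nonneg ρpos.le _) J
  rw [ENNReal.toReal_mul, ENNReal.toReal_natCast, ENNReal.toReal_ofReal (by positivity)] at K
  have e : (4 * r + 1) = ρ / δ := by simp only [ρ, δ]; ring
  rw [e, div_pow, le_div_iff₀ (by positivity)]
  exact K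

open Module in
lemma net (m : ℕ) (r : ℝ) (hr : 0 ≤ r) : ∃ N : ℕ, ∀ (E : Type) [NormedAddCommGroup E]
    [NormedSpace ℝ E] [FiniteDimensional ℝ E] (W : Submodule ℝ E), finrank ℝ W ≤ m →
    ∃ key : E → Fin N, ∀ x ∈ W, ∀ y ∈ W, ‖x‖ ≤ r → ‖y‖ ≤ r → key x = key y → ‖x - y‖ ≤ 1 := by
  classical
  refine ⟨⌊(4 * r + 1) ^ m⌋₊ + 1, ?_⟩
  intro E _ _ _ W hW
  set B := ⌊(4 * r + 1) ^ m⌋₊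
  let good : Finset W → Prop := fun s => (∀ c ∈ s, ‖c‖ ≤ r) ∧
    ∀ c ∈ s, ∀ d ∈ s, c ≠ d → 1/2 ≤ ‖c - d‖
  have hB : ∀ s, good s → s.card ≤ B := by
    intro s hs
    apply Nat.le_floor
    refine (card_sep r hr s hs.1 hs.2).trans ?_
    exact pow_le_pow_right₀ (by linarith) hW
  let T : Set ℕ := {k | ∃ s, good s ∧ s.card = k}
  have hT : T.Nonempty := ⟨0, ∅, ⟨by simp, by simp⟩, rfl⟩
  have hTb : BddAbove T := ⟨B, by rintro k ⟨s, hs, rfl⟩; exact hB s hs⟩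
  obtain ⟨s, hs, hsc⟩ := Nat.sSup_mem hT hTb
  have hmax : ∀ s', good s' → s'.card ≤ s.card := fun s' hs' => by
    rw [hsc]; exact le_csSup hTb ⟨s', hs', rfl⟩
  have cov : ∀ x : W, ‖x‖ ≤ r → ∃ c ∈ s, ‖x - c‖ < 1/2 := by
    intro x hx
    by_contra! hc
    have hxs : x ∉ s := fun h => by have := hc x h; norm_num at this
    have := hmax (insert x s) ⟨by
      intro c hc'
      rcases Finset.mem_insert.1 hc' with rfl | h
      · exact hx
      · exact hs.1 c h, by
      intro c hc' d hd' hcd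
      rcases Finset.mem_insert.1 hc' with rfl | h <;> rcases Finset.mem_insert.1 hd' with rfl | h'
      · exact absurd rfl hcd
      · exact hc d h'
      · rw [norm_sub_rev]; exact hc c h
      · exact hs.2 c h d h' hcd⟩
    rw [Finset.card_insert_of_notMem hxs] at this
    omega
  have hcard := hB s hs
  let em : s → Fin (B + 1) := fun c => ⟨s.equivFin c, by have := (s.equivFin c).2; omega⟩
  have emi : Function.Injective em := by
    intro a b hab
    have : (s.equivFin a : ℕ) = s.equivFin b := by simpa [em] using hab
    exact s.equivFin.injective (Fin.ext this)
  choose! f hf using cov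
  refine ⟨fun x => if h : x ∈ W ∧ ‖x‖ ≤ r then em ⟨f ⟨x, h.1⟩, (hf ⟨x, h.1⟩ h.2).1⟩ else 0, ?_⟩
  intro x hx y hy hxr hyr hk
  simp only [hx, hy, hxr, hyr, and_self, dif_pos] at hk
  have := congrArg Subtype.val (emi hk)
  simp only at this
  have h1 := (hf ⟨x, hx⟩ hxr).2
  have h2 := (hf ⟨y, hy⟩ hyr).2
  rw [← this] at h2
  have h3 := norm_sub_le_norm_sub_add_norm_sub (⟨x, hx⟩ : W) (f ⟨x, hx⟩) ⟨y, hy⟩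
  rw [norm_sub_rev (f _)] at h3
  change ‖x - y‖ ≤ _ at h3
  linarith

lemma exists_func_aux {E : Type} [NormedAddCommGroup E] [NormedSpace ℝ E] (A : Finset E) :
    (∀ p ∈ A, p ≠ 0) → (∀ p ∈ A, ∀ q ∈ A, p ≠ q → 8 * ‖p‖ ≤ ‖q‖ ∨ 8 * ‖q‖ ≤ ‖p‖) →
    ∀ M : ℝ, 0 < M → (∀ p ∈ A, ‖p‖ ≤ M) →
    ∃ l : E →ₗ[ℝ] ℝ, ∀ p ∈ A, ∃ m : ℤ, |l p - m - 1/2| ≤ 1/8 - ‖p‖ / (14 * M) := by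
  classical
  refine Finset.induction_on_max_value (fun p : E => ‖p‖) A ?_ ?_
  · intro _ _ _ _ _
    exact ⟨0, by simp⟩
  · intro q s hq hmax ih h0 hlac M hM hle
    have hq0 : q ≠ 0 := h0 q (Finset.mem_insert_self _ _)
    have hqp : 0 < ‖q‖ := norm_pos_iff.2 hq0
    obtain ⟨l, hl⟩ := ih (fun p hp => h0 p (Finset.mem_insert_of_mem hp))
      (fun p hp p' hp' => hlac p (Finset.mem_insert_of_mem hp) p' (Finset.mem_insert_of_mem hp'))
      (‖q‖ / 8) (by positivity) (by
        intro p hp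
        rcases hlac p (Finset.mem_insert_of_mem hp) q (Finset.mem_insert_self _ _)
          (by rintro rfl; exact hq hp) with h | h
        · linarith
        · have := hmax p hp
          linarith)
    obtain ⟨f, hf1, hf2⟩ := exists_dual_vector ℝ q hqp.ne'
    -- shift
    let d : ℝ := (round (l q - 1/2) : ℝ) + 1/2 - l q
    have hd : |d| ≤ 1/2 := by
      have := abs_sub_round (l q - 1/2)
      rw [abs_sub_comm] at this
      have e : d = (round (l q - 1/2) : ℝ) - (l q - 1/2) := by simp only [d]; ring
      rw [e]; exact this
    refine ⟨l + (d / ‖q‖) • f.toLinearMap, ?_⟩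
    have hval : ∀ p, (l + (d / ‖q‖) • f.toLinearMap) p = l p + d / ‖q‖ * f p := fun p => by simp
    have hqM := hle q (Finset.mem_insert_self _ _)
    intro p hp
    have hpM : ‖p‖ / (14 * M) ≤ ‖p‖ / (14 * ‖q‖) := by gcongr
    rcases Finset.mem_insert.1 hp with rfl | hp
    · refine ⟨round (l p - 1/2), ?_⟩
      rw [hval, hf2]
      have : l p + d / ‖p‖ * ‖p‖ = l p + d := by field_simp
      simp only [RCLike.ofReal_real_eq_id, id]
      rw [this]
      have z : l p + d - (round (l p - 1/2) : ℝ) - 1/2 = 0 := by simp only [d]; ring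
      rw [z, abs_zero]
      have : ‖p‖ / (14 * ‖p‖) = 1/14 := by field_simp
      linarith
    · obtain ⟨m, hm⟩ := hl p hp
      refine ⟨m, ?_⟩
      rw [hval]
      have hfp : |d / ‖q‖ * f p| ≤ 1/2 * (‖p‖ / ‖q‖) := by
        have := f.le_opNorm p
        rw [hf1, one_mul, Real.norm_eq_abs] at this
        rw [abs_mul, abs_div, abs_of_pos hqp]
        calc |d| / ‖q‖ * |f p| ≤ (1/2) / ‖q‖ * ‖p‖ := by gcongr
          _ = _ := by ring
      have t := abs_add_le (l p - m - 1/2) (d / ‖q‖ * f p)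
      have e1 : ‖p‖ / (14 * (‖q‖ / 8)) = 8/14 * (‖p‖ / ‖q‖) := by field_simp
      have e2 : ‖p‖ / (14 * ‖q‖) = 1/14 * (‖p‖ / ‖q‖) := by field_simp
      have e3 : l p + d / ‖q‖ * f p - m - 1/2 = l p - m - 1/2 + d / ‖q‖ * f p := by ring
      rw [e3]
      rw [e1] at hm
      rw [e2] at hpM
      linarith

lemma exists_func {E : Type} [NormedAddCommGroup E] [NormedSpace ℝ E] (A : Finset E)
    (h0 : ∀ p ∈ A, p ≠ 0) (h : ∀ p ∈ A, ∀ q ∈ A, p ≠ q → 8 * ‖p‖ ≤ ‖q‖ ∨ 8 * ‖q‖ ≤ ‖p‖) :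
    ∃ l : E →ₗ[ℝ] ℝ, ∀ p ∈ A, ∀ m : ℤ, 3/8 ≤ |l p - m| := by
  obtain ⟨l, hl⟩ := exists_func_aux A h0 h (1 + ∑ p ∈ A, ‖p‖) (by positivity) (fun p hp => by
    have := Finset.single_le_sum (f := fun p : E => ‖p‖) (fun q _ => norm_nonneg q) hp
    linarith)
  refine ⟨l, fun p hp m => ?_⟩
  obtain ⟨k, hk⟩ := hl p hp
  have : 0 ≤ ‖p‖ / (14 * (1 + ∑ p ∈ A, ‖p‖)) := by positivity
  have hk' := abs_le.1 (hk.trans (by linarith : _ ≤ (1/8 : ℝ)))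
  rcases le_or_gt m k with hmk | hmk
  · have : (m:ℝ) ≤ k := by exact_mod_cast hmk
    exact le_trans (by linarith) (le_abs_self _)
  · have : (k:ℝ) + 1 ≤ m := by exact_mod_cast hmk
    exact le_trans (by linarith) (neg_le_abs _)

namespace HS
variable {K ι : Type} [Field K] [CharZero K] [Fintype ι] (H : HS K ι)

noncomputable def L1 (u : Kˣ) : PiLp 1 (fun _ : ι ⊕ ι => ℝ) :=
  WithLp.toLp 1 (Sum.elim (fun i => H.w i * H.lg i u) (fun _ => 0))

noncomputable def L2 (u : Kˣ) : PiLp 1 (fun _ : ι ⊕ ι => ℝ) :=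
  WithLp.toLp 1 (Sum.elim (fun _ => 0) (fun i => H.w i * H.lg i u))

noncomputable def P (p : Kˣ × Kˣ) : PiLp 1 (fun _ : ι ⊕ ι => ℝ) := H.L1 p.1 + H.L2 p.2

lemma L1_mul (u v : Kˣ) : H.L1 (u * v) = H.L1 u + H.L1 v := by
  ext i
  rcases i with i | i
  · simp [L1, H.lg_mul i u.ne_zero v.ne_zero, mul_add]
  · simp [L1]

lemma L2_mul (u v : Kˣ) : H.L2 (u * v) = H.L2 u + H.L2 v := by
  ext i
  rcases i with i | i
  · simp [L2]
  · simp [L2, H.lg_mul i u.ne_zero v.ne_zero, mul_add]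

lemma norm_sub_smul (p q : Kˣ × Kˣ) (t : ℝ) : ‖H.P q - t • H.P p‖ =
    ∑ i, H.w i * (|H.lg i q.1 - t * H.lg i p.1| + |H.lg i q.2 - t * H.lg i p.2|) := by
  rw [PiLp.norm_eq_of_L1, Fintype.sum_sum_type, ← Finset.sum_add_distrib]
  refine Finset.sum_congr rfl fun i _ => ?_
  simp only [P, L1, L2, PiLp.sub_apply, PiLp.smul_apply, PiLp.add_apply, Sum.elim_inl,
    Sum.elim_inr, add_zero, zero_add, Real.norm_eq_abs, smul_eq_mul]
  rw [mul_add, ← abs_of_nonneg (H.w_nn i), ← abs_mul, ← abs_mul, abs_of_nonneg (H.w_nn i)]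
  congr 2 <;> ring

lemma norm_P (p : Kˣ × Kˣ) : ‖H.P p‖ = ∑ i, H.w i * (|H.lg i p.1| + |H.lg i p.2|) := by
  have := H.norm_sub_smul p p 0
  simpa using this

structure Sol (G : Subgroup Kˣ) (p : Kˣ × Kˣ) : Prop where
  m1 : p.1 ∈ G
  m2 : p.2 ∈ G
  eq : (p.1 : K) + (p.2 : K) = 2
  ne : p.1 ≠ 1

variable {G : Subgroup Kˣ} (hR : ∀ x ∈ G, (x : K) ∈ H.R)
include hR

lemma Sol.ext' {p q : Kˣ × Kˣ} (hp : Sol G p) (hq : Sol G q) (h : (p.1 : K) = q.1) : p = q := by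
  have h1 := hp.eq
  have h2 := hq.eq
  refine Prod.ext (Units.ext h) (Units.ext ?_)
  linear_combination h1 - h2 - h

lemma P_ne {p : Kˣ × Kˣ} (hp : Sol G p) : H.P p ≠ 0 := by
  intro h0
  have hn := H.norm_P p
  rw [h0, norm_zero] at hn
  have ex : ∃ i, 0 < H.w i ∧ H.arch i = true := by
    by_contra! hc
    have := H.wsum
    rw [Finset.sum_eq_zero] at this
    · norm_num at this
    · intro i _
      by_cases h : H.arch i = true
      · have : ¬ (0 < H.w i) := fun hw => hc i hw h
        have := le_antisymm (not_lt.1 this) (H.w_nn i)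
        simp [this]
      · simp [h]
  obtain ⟨i, hw, hi⟩ := ex
  have hz := (Finset.sum_eq_zero_iff_of_nonneg (fun j _ => mul_nonneg (H.w_nn j)
    (by positivity))).1 hn.symm i (Finset.mem_univ _)
  have hz' : |H.lg i p.1| + |H.lg i p.2| = 0 := by
    rcases mul_eq_zero.1 hz with h | h
    · exact absurd h hw.ne'
    · exact h
  have z1 : H.lg i p.1 = 0 := abs_eq_zero.1 (by
    have := abs_nonneg (H.lg i p.1); have := abs_nonneg (H.lg i p.2); linarith)
  have z2 : H.lg i p.2 = 0 := abs_eq_zero.1 (by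
    have := abs_nonneg (H.lg i p.1); have := abs_nonneg (H.lg i p.2); linarith)
  obtain ⟨σ, hσ⟩ := H.emb i hi
  have one : ∀ x : Kˣ, H.lg i x = 0 → ‖σ x‖ = 1 := by
    intro x hx
    rw [← hσ]
    exact Real.eq_one_of_pos_of_log_eq_zero ((H.abv i).pos x.ne_zero) hx
  have n1 := one _ z1
  have n2 := one _ z2
  have hs := congrArg σ hp.eq
  rw [map_add, map_ofNat σ 2] at hs
  apply hp.ne
  apply Units.ext
  apply σ.injective
  rw [Units.val_one, map_one]
  have s1 : (σ p.1).re ^ 2 + (σ p.1).im ^ 2 = 1 := by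
    have := Complex.sq_norm (σ p.1)
    rw [n1, Complex.normSq_apply] at this
    nlinarith
  have s2 : (σ p.2).re ^ 2 + (σ p.2).im ^ 2 = 1 := by
    have := Complex.sq_norm (σ p.2)
    rw [n2, Complex.normSq_apply] at this
    nlinarith
  have r := congrArg Complex.re hs
  have j := congrArg Complex.im hs
  simp at r j
  have r' : (σ p.1).re + (σ p.2).re = 2 := r
  have i1 := sq_nonneg (σ p.1).im
  have i2 := sq_nonneg (σ p.2).im
  have hr : (σ p.1).re = 1 := by nlinarith
  have hm : (σ p.1).im = 0 := by
    rw [hr] at s1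
    have : (σ p.1).im ^ 2 = 0 := by linarith
    exact (pow_eq_zero_iff two_ne_zero).1 this
  apply Complex.ext <;> simp [hr, hm]

lemma invR {x : Kˣ} (hx : x ∈ G) : (x : K)⁻¹ ∈ H.R := by
  have := hR x⁻¹ (G.inv_mem hx)
  simpa using this

lemma big_gap {p q : Kˣ × Kˣ} (hp : Sol G p) (hq : Sol G q) (hne : p ≠ q)
    (hN : 96 ≤ ‖H.P p‖) (h1 : ‖H.P p‖ ≤ ‖H.P q‖)
    (hd : ‖(24 / ‖H.P p‖) • H.P p - (24 / ‖H.P q‖) • H.P q‖ ≤ 1) :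
    3/2 * ‖H.P p‖ < ‖H.P q‖ := by
  by_contra! hc
  have pp : 0 < ‖H.P p‖ := by linarith
  have pq : 0 < ‖H.P q‖ := by linarith
  set t := ‖H.P q‖ / ‖H.P p‖ with ht
  have t1 : 1 ≤ t := by rw [ht, le_div_iff₀ pp]; linarith
  have t2 : t ≤ 3/2 := by rw [ht, div_le_iff₀ pp]; linarith
  have g := H.gap p.1.ne_zero p.2.ne_zero q.1.ne_zero q.2.ne_zero (hR _ hp.m1) (hR _ hp.m2)
    (H.invR hR hp.m1) (H.invR hR hp.m2) (hR _ hq.m1) hp.eq hq.eq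
    (fun h => hne (Sol.ext' H hR hp hq h)) t t1 t2
  rw [← H.norm_sub_smul p q t, ← H.norm_P p] at g
  have e : H.P q - t • H.P p = (-(‖H.P q‖ / 24)) •
      ((24 / ‖H.P p‖) • H.P p - (24 / ‖H.P q‖) • H.P q) := by
    rw [smul_sub, smul_smul, smul_smul]
    have e1 : -(‖H.P q‖ / 24) * (24 / ‖H.P p‖) = -t := by rw [ht]; field_simp
    have e2 : -(‖H.P q‖ / 24) * (24 / ‖H.P q‖) = -1 := by field_simp
    rw [e1, e2]
    module
  have : ‖H.P q - t • H.P p‖ ≤ ‖H.P q‖ / 24 := by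
    rw [e, norm_smul, norm_neg, Real.norm_of_nonneg (by positivity)]
    exact mul_le_of_le_one_right (by positivity) hd
  have := Real.log_two_lt_d9
  linarith

lemma small_cluster {p q r : Kˣ × Kˣ} (hp : Sol G p) (hq : Sol G q) (hr : Sol G r)
    (hpq : p ≠ q) (hpr : p ≠ r) (hqr : q ≠ r)
    (h1 : ‖H.P q - H.P p‖ ≤ 1/1000) (h2 : ‖H.P r - H.P p‖ ≤ 1/1000) : False := by
  have n : ∀ {p q : Kˣ × Kˣ}, Sol G p → Sol G q → p ≠ q → (p.1 : K) ≠ q.1 :=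
    fun hp hq hne h => hne (Sol.ext' H hR hp hq h)
  obtain ⟨hf, hg⟩ := cluster_alg p.1.ne_zero p.2.ne_zero q.1.ne_zero q.2.ne_zero r.1.ne_zero
    r.2.ne_zero hp.eq hq.eq hr.eq (n hp hq hpq) (n hp hr hpr) (n hq hr hqr)
  apply hg
  have nz : ∀ a b : Kˣ, (a : K) / b ≠ 0 := fun a b => div_ne_zero a.ne_zero b.ne_zero
  have mR : ∀ a b : Kˣ, a ∈ G → b ∈ G → ((a : K) / b)⁻¹ ∈ H.R := by
    intro a b ha hb
    rw [inv_div, div_eq_mul_inv]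
    exact H.R.mul_mem (hR _ hb) (H.invR hR ha)
  refine H.cluster_G (nz _ _) (nz _ _) (nz _ _) (nz _ _) hf (mR _ _ hq.m1 hp.m1)
    (mR _ _ hq.m2 hp.m2) (mR _ _ hr.m1 hp.m1) (mR _ _ hr.m2 hp.m2) ?_
  have lgd : ∀ i, ∀ a b : Kˣ, H.lg i ((a : K) / b) = H.lg i a - H.lg i b := by
    intro i a b
    rw [div_eq_mul_inv, H.lg_mul i a.ne_zero (inv_ne_zero b.ne_zero), lg_inv]; ring
  simp_rw [lgd]
  have s1 := H.norm_sub_smul p q 1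
  have s2 := H.norm_sub_smul p r 1
  simp only [one_smul, one_mul] at s1 s2
  have : ∑ i, H.w i * (|H.lg i q.1 - H.lg i p.1| + |H.lg i q.2 - H.lg i p.2| +
      |H.lg i r.1 - H.lg i p.1| + |H.lg i r.2 - H.lg i p.2|) =
      ‖H.P q - H.P p‖ + ‖H.P r - H.P p‖ := by
    rw [s1, s2, ← Finset.sum_add_distrib]
    exact Finset.sum_congr rfl fun i _ => by ring
  rw [this]
  linarith

end HS

lemma log_level {a b : ℝ} (ha : 0 < a) (hb : 0 < b)
    (h : (⌊Real.log a / Real.log (3/2)⌋ : ZMod 7) = ⌊Real.log b / Real.log (3/2)⌋)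
    (hab : 3/2 * a < b) : 8 * a ≤ b := by
  have l : 0 < Real.log (3/2) := Real.log_pos (by norm_num)
  set x := Real.log a / Real.log (3/2) with hx
  set y := Real.log b / Real.log (3/2) with hy
  have hxy : x + 1 ≤ y := by
    have := Real.log_le_log (by positivity) hab.le
    rw [Real.log_mul (by norm_num) ha.ne'] at this
    rw [hx, hy, div_add_one l.ne', div_le_div_iff_of_pos_right l]
    linarith
  have hlt : ⌊x⌋ < ⌊y⌋ := by
    have := Int.floor_le_floor hxy
    rw [Int.floor_add_one] at this
    omega
  have hdvd := (ZMod.intCast_eq_intCast_iff_dvd_sub _ _ 7).1 h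
  have : ⌊x⌋ + 7 ≤ ⌊y⌋ := by
    have h1 : 0 < ⌊y⌋ - ⌊x⌋ := by omega
    have := Int.le_of_dvd h1 hdvd
    push_cast at this
    omega
  have h6 : x + 6 ≤ y := by
    have h1 := Int.lt_floor_add_one x
    have h2 := Int.floor_le y
    have h3 : ((⌊x⌋ + 7 : ℤ) : ℝ) ≤ ⌊y⌋ := by exact_mod_cast this
    push_cast at h3
    linarith
  have h7 : Real.log a + 6 * Real.log (3/2) ≤ Real.log b := by
    have := mul_le_mul_of_nonneg_right h6 l.le
    rw [add_mul, hx, hy, div_mul_cancel₀ _ l.ne', div_mul_cancel₀ _ l.ne'] at this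
    exact this
  have h8 : Real.log ((3/2)^6 * a) ≤ Real.log b := by
    rw [Real.log_mul (by norm_num) ha.ne', Real.log_pow]
    push_cast; linarith
  have := (Real.log_le_log_iff (by positivity) hb).1 h8
  norm_num at this
  linarith

/-- classification of the solutions -/
lemma exists_keys (m : ℕ) : ∃ N : ℕ, ∀ (K ι : Type) [Field K] [CharZero K] [Fintype ι] (H : HS K ι)
    (G : Subgroup Kˣ) (_ : ∀ x ∈ G, (x : K) ∈ H.R)
    (W : Submodule ℝ (PiLp 1 (fun _ : ι ⊕ ι => ℝ))) (_ : Module.finrank ℝ W ≤ m)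
    (_ : ∀ u ∈ G, ∀ v ∈ G, H.P (u, v) ∈ W) (U : Finset (Kˣ × Kˣ)) (_ : ∀ p ∈ U, HS.Sol G p),
    ∃ key : Kˣ × Kˣ → Fin N, ∀ p ∈ U, ∀ q ∈ U, key p = key q → p ≠ q →
      8 * ‖H.P p‖ ≤ ‖H.P q‖ ∨ 8 * ‖H.P q‖ ≤ ‖H.P p‖ := by
  classical
  obtain ⟨Nl, hl⟩ := net m 24 (by norm_num)
  obtain ⟨Ns, hs⟩ := net m 96000 (by norm_num)
  let κ := Fin (2 * Ns) ⊕ (Fin Nl × ZMod 7)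
  suffices h : ∀ (K ι : Type) [Field K] [CharZero K] [Fintype ι] (H : HS K ι)
    (G : Subgroup Kˣ) (_ : ∀ x ∈ G, (x : K) ∈ H.R)
    (W : Submodule ℝ (PiLp 1 (fun _ : ι ⊕ ι => ℝ))) (_ : Module.finrank ℝ W ≤ m)
    (_ : ∀ u ∈ G, ∀ v ∈ G, H.P (u, v) ∈ W) (U : Finset (Kˣ × Kˣ)) (_ : ∀ p ∈ U, HS.Sol G p),
    ∃ key : Kˣ × Kˣ → κ, ∀ p ∈ U, ∀ q ∈ U, key p = key q → p ≠ q →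
      8 * ‖H.P p‖ ≤ ‖H.P q‖ ∨ 8 * ‖H.P q‖ ≤ ‖H.P p‖ by
    refine ⟨Fintype.card κ, ?_⟩
    intro K ι _ _ _ H G hR W hW hP U hU
    obtain ⟨key, hk⟩ := h K ι H G hR W hW hP U hU
    exact ⟨fun p => Fintype.equivFin κ (key p), fun p hp q hq he =>
      hk p hp q hq ((Fintype.equivFin κ).injective he)⟩
  intro K ι _ _ _ H G hR W hW hP U hU
  obtain ⟨kl, hkl⟩ := hl _ W hW
  obtain ⟨ks, hks⟩ := hs _ W hW
  have hPW : ∀ p ∈ U, H.P p ∈ W := fun p hp => hP _ (hU p hp).m1 _ (hU p hp).m2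
  let Us := U.filter fun p => ‖H.P p‖ < 96
  have hcard : Us.card ≤ 2 * Ns := by
    have := Finset.card_le_mul_card_image_of_maps_to (s := Us)
      (t := (Finset.univ : Finset (Fin Ns))) (f := fun p => ks ((1000:ℝ) • H.P p))
      (fun _ _ => Finset.mem_univ _) 2 ?_
    · simpa using this
    · intro k _
      by_contra! hc
      obtain ⟨p, q, r, hp, hq, hr, hpq, hpr, hqr⟩ := Finset.two_lt_card_iff.1 hc
      simp only [Us, Finset.mem_filter] at hp hq hr
      have close : ∀ p q : Kˣ × Kˣ, ((p ∈ U ∧ ‖H.P p‖ < 96) ∧ ks ((1000:ℝ) • H.P p) = k) →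
          ((q ∈ U ∧ ‖H.P q‖ < 96) ∧ ks ((1000:ℝ) • H.P q) = k) →
          ‖H.P q - H.P p‖ ≤ 1/1000 := by
        intro p q hp hq
        have nn : ∀ p, ‖H.P p‖ < 96 → ‖(1000:ℝ) • H.P p‖ ≤ 96000 := by
          intro p hp
          rw [norm_smul, Real.norm_of_nonneg (by norm_num)]; linarith
        have := hks _ (W.smul_mem 1000 (hPW q hq.1.1)) _ (W.smul_mem 1000 (hPW p hp.1.1))
          (nn q hq.1.2) (nn p hp.1.2) (hq.2.trans hp.2.symm)
        rw [← smul_sub, norm_smul, Real.norm_of_nonneg (by norm_num)] at this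
        linarith
      exact H.small_cluster hR (hU p hp.1.1) (hU q hq.1.1) (hU r hr.1.1) hpq hpr hqr
        (close p q hp hq) (close p r hp hr)
  let em : Us → Fin (2 * Ns) := fun c => Fin.castLE hcard (Us.equivFin c)
  have emi : Function.Injective em :=
    (Fin.castLE_injective hcard).comp Us.equivFin.injective
  refine ⟨fun p => if h : p ∈ Us then Sum.inl (em ⟨p, h⟩) else
    Sum.inr (kl ((24 / ‖H.P p‖) • H.P p), (⌊Real.log ‖H.P p‖ / Real.log (3/2)⌋ : ZMod 7)), ?_⟩
  intro p hp q hq hk hne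
  by_cases h1 : p ∈ Us <;> by_cases h2 : q ∈ Us
  · simp only [h1, h2, dif_pos] at hk
    have hk := Sum.inl.inj hk
    exact absurd (congrArg Subtype.val (emi hk)) hne
  · simp [h1, h2] at hk
  · simp [h1, h2] at hk
  · simp only [h1, h2, dif_neg, not_false_eq_true] at hk
    have hk := Prod.mk.inj (Sum.inr.inj hk)
    have b1 : 96 ≤ ‖H.P p‖ := by simpa [Us, hp] using h1
    have b2 : 96 ≤ ‖H.P q‖ := by simpa [Us, hq] using h2
    have nn : ∀ p, 96 ≤ ‖H.P p‖ → ‖(24 / ‖H.P p‖) • H.P p‖ ≤ 24 := by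
      intro p hp
      have : 0 < ‖H.P p‖ := by linarith
      rw [norm_smul, Real.norm_of_nonneg (by positivity), div_mul_cancel₀ _ this.ne']
    have c1 := hkl _ (W.smul_mem _ (hPW p hp)) _ (W.smul_mem _ (hPW q hq)) (nn p b1) (nn q b2) hk.1
    have c2 := c1
    rw [norm_sub_rev] at c2
    rcases le_total ‖H.P p‖ ‖H.P q‖ with hle | hle
    · left
      exact log_level (by linarith) (by linarith) hk.2
        (H.big_gap hR (hU p hp) (hU q hq) hne b1 hle c1)
    · right
      exact log_level (by linarith) (by linarith) hk.2.symm
        (H.big_gap hR (hU q hq) (hU p hp) hne.symm b2 hle c2)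

lemma bucket {a b : ℝ} (h : ⌊8 * Int.fract a⌋ = ⌊8 * Int.fract b⌋) :
    ∃ m : ℤ, |a - b - m| < 1/8 := by
  refine ⟨⌊a⌋ - ⌊b⌋, ?_⟩
  have := Int.abs_sub_lt_one_of_floor_eq_floor h
  rw [← mul_sub, abs_mul] at this
  norm_num at this
  have e : a - b - ((⌊a⌋ - ⌊b⌋ : ℤ) : ℝ) = Int.fract a - Int.fract b := by
    rw [Int.fract, Int.fract]; push_cast; ring
  rw [e]; linarith

noncomputable def bk (a : ℝ) : Fin 8 := ⟨⌊8 * Int.fract a⌋.toNat, by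
  have h1 := Int.fract_lt_one a
  have h2 := Int.fract_nonneg a
  have : ⌊8 * Int.fract a⌋ < 8 := Int.floor_lt.2 (by push_cast; linarith)
  omega⟩

lemma bk_eq {a b : ℝ} (h : bk a = bk b) : ∃ m : ℤ, |a - b - m| < 1/8 := by
  apply bucket
  have h1 : 0 ≤ ⌊8 * Int.fract a⌋ := Int.floor_nonneg.2 (by have := Int.fract_nonneg a; positivity)
  have h2 : 0 ≤ ⌊8 * Int.fract b⌋ := Int.floor_nonneg.2 (by have := Int.fract_nonneg b; positivity)
  have := congrArg Fin.val h
  simp only [bk] at this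
  omega

lemma exists_col (m : ℕ) : ∃ r : ℕ, ∀ (K ι : Type) [Field K] [CharZero K] [Fintype ι] (H : HS K ι)
    (G : Subgroup Kˣ) (_ : ∀ x ∈ G, (x : K) ∈ H.R)
    (W : Submodule ℝ (PiLp 1 (fun _ : ι ⊕ ι => ℝ))) (_ : Module.finrank ℝ W ≤ m)
    (_ : ∀ u ∈ G, ∀ v ∈ G, H.P (u, v) ∈ W) (U : Finset (Kˣ × Kˣ)) (_ : ∀ p ∈ U, HS.Sol G p),
    ∃ c : Kˣ → Fin r, ∀ y, ∀ p ∈ U, c (y * p.1) = c y → c (y * p.2) = c y → False := by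
  classical
  obtain ⟨N, hN⟩ := exists_keys m
  refine ⟨Fintype.card (Fin N → Fin 8 × Fin 8), ?_⟩
  intro K ι _ _ _ H G hR W hW hP U hU
  obtain ⟨key, hkey⟩ := hN K ι H G hR W hW hP U hU
  have ex : ∀ k : Fin N, ∃ l : PiLp 1 (fun _ : ι ⊕ ι => ℝ) →ₗ[ℝ] ℝ,
      ∀ p ∈ U, key p = k → ∀ j : ℤ, 3/8 ≤ |l (H.P p) - j| := by
    intro k
    obtain ⟨l, hl⟩ := exists_func ((U.filter fun p => key p = k).image H.P) (by
      intro x hx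
      obtain ⟨p, hp, rfl⟩ := Finset.mem_image.1 hx
      exact H.P_ne hR (hU p (Finset.mem_filter.1 hp).1)) (by
      intro x hx y hy hxy
      obtain ⟨p, hp, rfl⟩ := Finset.mem_image.1 hx
      obtain ⟨q, hq, rfl⟩ := Finset.mem_image.1 hy
      have hp := Finset.mem_filter.1 hp
      have hq := Finset.mem_filter.1 hq
      exact hkey p hp.1 q hq.1 (hp.2.trans hq.2.symm) (by rintro rfl; exact hxy rfl))
    exact ⟨l, fun p hp hk => hl _ (Finset.mem_image_of_mem _ (Finset.mem_filter.2 ⟨hp, hk⟩))⟩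
  choose l hl using ex
  refine ⟨fun y => Fintype.equivFin _ (fun k => (bk (l k (H.L1 y)), bk (l k (H.L2 y)))), ?_⟩
  intro y p hp h1 h2
  have h1 := congrArg Prod.fst (congrFun ((Fintype.equivFin _).injective h1) (key p))
  have h2 := congrArg Prod.snd (congrFun ((Fintype.equivFin _).injective h2) (key p))
  obtain ⟨a, ha⟩ := bk_eq h1
  obtain ⟨b, hb⟩ := bk_eq h2
  rw [H.L1_mul, map_add, add_sub_cancel_left] at ha
  rw [H.L2_mul, map_add, add_sub_cancel_left] at hb
  have := hl (key p) p hp rfl (a + b)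
  rw [HS.P, map_add] at this
  have e : l (key p) (H.L1 p.1) + l (key p) (H.L2 p.2) - ((a + b : ℤ) : ℝ) =
    (l (key p) (H.L1 p.1) - a) + (l (key p) (H.L2 p.2) - b) := by push_cast; ring
  rw [e] at this
  have := abs_add_le (l (key p) (H.L1 p.1) - a) (l (key p) (H.L2 p.2) - b)
  linarith

open NumberField in
noncomputable def nfHS (K : Type) [Field K] [NumberField K] (S : Finset (FinitePlace K)) :
    HS K (InfinitePlace K ⊕ S) where
  abv := Sum.elim (fun w => w.1) (fun v => v.1.1)
  w := Sum.elim (fun w => (w.mult : ℝ) / Module.finrank ℚ K) (fun _ => 1 / Module.finrank ℚ K)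
  w_nn := by
    rintro (i | i) <;> simp only [Sum.elim_inl, Sum.elim_inr] <;> positivity
  arch := Sum.isLeft
  emb := by
    rintro (i | i) h
    · exact ⟨i.embedding, fun x => (i.norm_embedding_eq x).symm⟩
    · simp at h
  na := by
    rintro (i | i) h x y
    · simp at h
    · exact FinitePlace.add_le i.1 x y
  wsum := by
    have hd : (0 : ℝ) < Module.finrank ℚ K := by exact_mod_cast Module.finrank_pos
    simp only [Fintype.sum_sum_type, Sum.elim_inl, Sum.elim_inr, Sum.isLeft_inl, Sum.isLeft_inr,
      if_true, mul_one, Bool.false_eq_true, if_false, mul_zero, Finset.sum_const_zero, add_zero]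
    rw [← Finset.sum_div, ← Nat.cast_sum, InfinitePlace.sum_mult_eq, div_self hd.ne']
  R :=
    { carrier := {x | ∀ v : FinitePlace K, v ∉ S → v x ≤ 1}
      mul_mem' := by
        intro a b ha hb v hv
        rw [map_mul]
        exact mul_le_one₀ (ha v hv) (apply_nonneg _ _) (hb v hv)
      one_mem' := by intro v _; simp
      add_mem' := by
        intro a b ha hb v hv
        exact (FinitePlace.add_le v a b).trans (max_le (ha v hv) (hb v hv))
      zero_mem' := by intro v _; simp
      neg_mem' := by
        intro a ha v hv
        rw [map_neg_eq_map]; exact ha v hv }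
  pf := by
    classical
    intro x hx h0
    have hd : (0 : ℝ) < Module.finrank ℚ K := by exact_mod_cast Module.finrank_pos
    have pr := prod_abs_eq_one h0
    have hfin : (Function.mulSupport fun v : FinitePlace K => v x).Finite :=
      FinitePlace.hasFiniteMulSupport h0
    rw [finprod_eq_prod_of_mulSupport_subset (s := S ∪ hfin.toFinset) _ (by
      intro v hv; simp only [Finset.coe_union, Set.Finite.coe_toFinset]; exact Or.inr hv)] at pr
    rw [← Finset.prod_sdiff (Finset.subset_union_left (s₁ := S) (s₂ := hfin.toFinset))] at pr
    have h1 : ∏ v ∈ (S ∪ hfin.toFinset) \ S, v x ≤ 1 :=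
      Finset.prod_le_one (fun v _ => apply_nonneg _ _)
        (fun v hv => hx v (Finset.mem_sdiff.1 hv).2)
    have p1 : 0 < ∏ w : InfinitePlace K, w x ^ w.mult :=
      Finset.prod_pos fun w _ => pow_pos (InfinitePlace.pos_iff.2 h0) _
    have p2 : 0 < ∏ v ∈ S, v x := Finset.prod_pos fun v _ => FinitePlace.pos_iff.2 h0
    have key : 1 ≤ (∏ w : InfinitePlace K, w x ^ w.mult) * ∏ v ∈ S, v x := by
      rw [← pr]
      gcongr
      exact mul_le_of_le_one_left p2.le h1
    have hl := Real.log_nonneg key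
    rw [Real.log_mul p1.ne' p2.ne', Real.log_prod (fun w _ => (pow_pos (InfinitePlace.pos_iff.2 h0) _).ne'),
      Real.log_prod (fun w _ => (FinitePlace.pos_iff.2 h0).ne')] at hl
    simp only [Real.log_pow] at hl
    have e : ∑ i : InfinitePlace K ⊕ S, (Sum.elim (fun w : InfinitePlace K => (w.mult : ℝ) / Module.finrank ℚ K)
        (fun _ => 1 / (Module.finrank ℚ K : ℝ)) i) *
        Real.log ((Sum.elim (fun w : InfinitePlace K => w.1) (fun v : S => v.1.1) i : AbsoluteValue K ℝ) x)
        = (∑ w : InfinitePlace K, (w.mult : ℝ) * Real.log (w x) + ∑ v ∈ S, Real.log (v x)) /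
          Module.finrank ℚ K := by
      rw [Fintype.sum_sum_type, add_div, Finset.sum_div, Finset.sum_div]
      simp only [Sum.elim_inl, Sum.elim_inr]
      congr 1
      · refine Finset.sum_congr rfl fun w _ => ?_
        change _ * Real.log (w x) = _
        ring
      · rw [← Finset.sum_coe_sort S]
        refine Finset.sum_congr rfl fun w _ => ?_
        change _ * Real.log (w.1 x) = _
        ring
    rw [e]
    positivity

lemma exists_spec (Γ : Subgroup ℂˣ) (hΓ : Γ.FG) (F : Finset Γ) :
    ∃ (K : Type) (_ : Field K) (_ : NumberField K) (φ : Γ →* Kˣ),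
      (∀ x ∈ F, ∀ y ∈ F, φ x = φ y → x = y) ∧
      ∀ x y z : Γ, ((x : ℂˣ) : ℂ) + ((z : ℂˣ) : ℂ) = 2 * ((y : ℂˣ) : ℂ) →
        ((φ x : Kˣ) : K) + (φ z : K) = 2 * (φ y : K) := by
  classical
  obtain ⟨T, hT⟩ := hΓ
  let B : Finset ℂ := T.image (fun u : ℂˣ => (u : ℂ)) ∪ T.image (fun u : ℂˣ => ((u⁻¹ : ℂˣ) : ℂ))
  let A := Algebra.adjoin ℚ (B : Set ℂ)
  have hft : Algebra.FiniteType ℚ A := (Subalgebra.fg_iff_finiteType _).1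
    (Subalgebra.fg_adjoin_finset B)
  have hmem : ∀ u ∈ Γ, (u : ℂ) ∈ A ∧ ((u⁻¹ : ℂˣ) : ℂ) ∈ A := by
    intro u hu
    rw [← hT] at hu
    induction hu using Subgroup.closure_induction with
    | mem x hx =>
      constructor <;> apply Algebra.subset_adjoin <;> simp only [B, Finset.coe_union, Finset.coe_image]
      · exact Or.inl ⟨x, hx, rfl⟩
      · exact Or.inr ⟨x, hx, rfl⟩
    | one => simp [A.one_mem]
    | mul x y _ _ h1 h2 =>
      refine ⟨?_, ?_⟩
      · rw [Units.val_mul]; exact A.mul_mem h1.1 h2.1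
      · rw [mul_inv, Units.val_mul]; exact A.mul_mem h1.2 h2.2
    | inv x _ h => exact ⟨h.2, by rw [inv_inv]; exact h.1⟩
  let j : Γ →* A :=
    { toFun := fun u => ⟨((u : ℂˣ) : ℂ), (hmem u u.2).1⟩
      map_one' := by ext; simp
      map_mul' := by intro x y; ext; simp }
  have jinj : ∀ x y, j x = j y → x = y := by
    intro x y h
    exact Subtype.ext (Units.ext (congrArg Subtype.val h))
  let f : A := ∏ p ∈ F.offDiag, (j p.1 - j p.2)
  have hf : f ≠ 0 := by
    apply Finset.prod_ne_zero_iff.2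
    intro p hp h
    exact (Finset.mem_offDiag.1 hp).2.2 (jinj _ _ (sub_eq_zero.1 h))
  have hJ : IsJacobsonRing A := isJacobsonRing_of_finiteType (A := ℚ)
  obtain ⟨M, hM, hfM⟩ : ∃ M : Ideal A, M.IsMaximal ∧ f ∉ M := by
    by_contra! hc
    have h1 : (⊥ : Ideal A).jacobson = ⊥ := hJ.out Ideal.isPrime_bot.isRadical
    have : f ∈ (⊥ : Ideal A).jacobson := by
      rw [Ideal.jacobson, Submodule.mem_sInf]
      exact fun J hJ => hc J hJ.2
    rw [h1] at this
    exact hf this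
  letI : Field (A ⧸ M) := Ideal.Quotient.field M
  have fin : Module.Finite ℚ (A ⧸ M) := finite_of_finite_type_of_isJacobsonRing ℚ (A ⧸ M)
  have cz : CharZero (A ⧸ M) := algebraRat.charZero _
  have nf : NumberField (A ⧸ M) :=
    { to_charZero := cz
      to_finiteDimensional := by
        convert fin
        exact Subsingleton.elim _ _ }
  let φ : Γ →* (A ⧸ M)ˣ := MonoidHom.toHomUnits ((Ideal.Quotient.mk M).toMonoidHom.comp j)
  have hφ : ∀ x, ((φ x : (A ⧸ M)ˣ) : A ⧸ M) = Ideal.Quotient.mk M (j x) := fun x => rfl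
  refine ⟨A ⧸ M, inferInstance, nf, φ, ?_, ?_⟩
  · intro x hx y hy h
    by_contra hne
    apply hfM
    have h1 : j x - j y ∈ M := by
      rw [← Ideal.Quotient.eq, ← hφ, ← hφ, h]
    exact Ideal.mem_of_dvd _ (Finset.dvd_prod_of_mem (fun p : Γ × Γ => j p.1 - j p.2)
      (Finset.mem_offDiag.2 ⟨hx, hy, hne⟩ : (x, y) ∈ F.offDiag)) h1
  · intro x y z h
    have h1 : j x + j z = 2 * j y := by
      apply Subtype.ext
      exact h
    have := congrArg (Ideal.Quotient.mk M) h1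
    rw [map_add, map_mul] at this
    rw [hφ, hφ, hφ, this]
    congr 1

open NumberField in
lemma finite_version (Γ : Subgroup ℂˣ) (hΓ : Γ.FG) : ∃ r : ℕ, ∀ F : Finset Γ, ∃ c : Γ → Fin r,
    ∀ x ∈ F, ∀ y ∈ F, ∀ z ∈ F, c x = c y → c y = c z →
      ((x : ℂˣ) : ℂ) + ((z : ℂˣ) : ℂ) = 2 * ((y : ℂˣ) : ℂ) → x = y := by
  classical
  have hFG : Group.FG Γ := (Group.fg_iff_subgroup_fg Γ).2 hΓ
  obtain ⟨T, hT⟩ := hFG.out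
  obtain ⟨r, hr⟩ := exists_col (2 * T.card)
  refine ⟨r, fun F => ?_⟩
  obtain ⟨K, _, _, φ, hinj, hadd⟩ := exists_spec Γ hΓ F
  have hS : ∀ g : Γ, (Function.mulSupport fun v : FinitePlace K => v (φ g : K)).Finite :=
    fun g => FinitePlace.hasFiniteMulSupport (φ g).ne_zero
  let S : Finset (FinitePlace K) := T.biUnion fun g => (hS g).toFinset
  let H := nfHS K S
  have hind : ∀ x : Γ, x ∈ Subgroup.closure (T : Set Γ) := fun x => by rw [hT]; trivial
  have h1 : ∀ x : Γ, ∀ v : FinitePlace K, v ∉ S → v (φ x : K) = 1 := by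
    intro x v hv
    induction hind x using Subgroup.closure_induction with
    | mem g hg =>
      by_contra hc
      exact hv (Finset.mem_biUnion.2 ⟨g, hg, by simpa using hc⟩)
    | one => simp
    | mul x y _ _ h1 h2 => rw [map_mul, Units.val_mul, map_mul, h1, h2, one_mul]
    | inv x _ h => rw [map_inv, Units.val_inv_eq_inv_val, map_inv₀, h, inv_one]
  have hR : ∀ u ∈ φ.range, (u : K) ∈ H.R := by
    rintro _ ⟨x, rfl⟩ v hv
    exact (h1 x v hv).le
  let B := T.image (fun g => H.L1 (φ g)) ∪ T.image (fun g => H.L2 (φ g))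
  let W := Submodule.span ℝ (B : Set (PiLp 1 (fun _ : (InfinitePlace K ⊕ S) ⊕ (InfinitePlace K ⊕ S) => ℝ)))
  have hW : Module.finrank ℝ W ≤ 2 * T.card := by
    refine (finrank_span_finset_le_card B).trans ((Finset.card_union_le _ _).trans ?_)
    have := Finset.card_image_le (s := T) (f := fun g => H.L1 (φ g))
    have := Finset.card_image_le (s := T) (f := fun g => H.L2 (φ g))
    omega
  have L1one : H.L1 1 = 0 := by
    have := H.L1_mul 1 1
    rwa [one_mul, left_eq_add] at this
  have L2one : H.L2 1 = 0 := by
    have := H.L2_mul 1 1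
    rwa [one_mul, left_eq_add] at this
  have L1W : ∀ x : Γ, H.L1 (φ x) ∈ W := by
    intro x
    induction hind x using Subgroup.closure_induction with
    | mem g hg => exact Submodule.subset_span (Finset.mem_coe.2 (Finset.mem_union_left _
        (Finset.mem_image_of_mem (fun g => H.L1 (φ g)) hg)))
    | one => rw [map_one, L1one]; exact W.zero_mem
    | mul x y _ _ h1 h2 => rw [map_mul, H.L1_mul]; exact W.add_mem h1 h2
    | inv x _ h =>
      have : H.L1 (φ x⁻¹) = - H.L1 (φ x) := by
        rw [eq_neg_iff_add_eq_zero, ← H.L1_mul, ← map_mul, inv_mul_cancel, map_one, L1one]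
      rw [this]; exact W.neg_mem h
  have L2W : ∀ x : Γ, H.L2 (φ x) ∈ W := by
    intro x
    induction hind x using Subgroup.closure_induction with
    | mem g hg => exact Submodule.subset_span (Finset.mem_coe.2 (Finset.mem_union_right _
        (Finset.mem_image_of_mem (fun g => H.L2 (φ g)) hg)))
    | one => rw [map_one, L2one]; exact W.zero_mem
    | mul x y _ _ h1 h2 => rw [map_mul, H.L2_mul]; exact W.add_mem h1 h2
    | inv x _ h =>
      have : H.L2 (φ x⁻¹) = - H.L2 (φ x) := by
        rw [eq_neg_iff_add_eq_zero, ← H.L2_mul, ← map_mul, inv_mul_cancel, map_one, L2one]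
      rw [this]; exact W.neg_mem h
  let U : Finset (Kˣ × Kˣ) := ((F ×ˢ F ×ˢ F).image fun t =>
    ((φ t.2.1)⁻¹ * φ t.1, (φ t.2.1)⁻¹ * φ t.2.2)).filter fun p => HS.Sol φ.range p
  obtain ⟨c, hc⟩ := hr K _ H φ.range hR W hW
    (by rintro _ ⟨x, rfl⟩ _ ⟨y, rfl⟩; exact W.add_mem (L1W x) (L2W y)) U
    (fun p hp => (Finset.mem_filter.1 hp).2)
  refine ⟨fun x => c (φ x), ?_⟩
  intro x hx y hy z hz hxy hyz hap
  by_contra hne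
  refine hc (φ y) ((φ y)⁻¹ * φ x, (φ y)⁻¹ * φ z) ?_ (by simpa using hxy) (by simpa using hyz.symm)
  refine Finset.mem_filter.2 ⟨Finset.mem_image.2 ⟨(x, y, z), by simp [hx, hy, hz], rfl⟩, ?_⟩
  refine ⟨⟨y⁻¹ * x, by simp⟩, ⟨y⁻¹ * z, by simp⟩, ?_, ?_⟩
  · have := hadd x y z hap
    have n := (φ y).ne_zero
    simp only [Units.val_mul, Units.val_inv_eq_inv_val]
    rw [← mul_add, this]
    field_simp
  · intro h
    apply hne
    apply hinj x hx y hy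
    exact (inv_mul_eq_one.1 h).symm

/-- A finitely generated multiplicative subgroup `Γ` of `ℂˣ` admits a finite coloring
with no nonconstant monochromatic 3-term arithmetic progression: every monochromatic
triple `x, y, z ∈ Γ` with `x + z = 2y` (in `ℂ`) satisfies `x = y = z`. -/
theorem stmt_10 (Γ : Subgroup ℂˣ) (hΓ : Γ.FG) :
    ∃ (r : ℕ) (c : Γ → Fin r), ∀ x y z : Γ,
      c x = c y → c y = c z →
      ((x : ℂˣ) : ℂ) + ((z : ℂˣ) : ℂ) = 2 * ((y : ℂˣ) : ℂ) →
      x = y ∧ y = z := by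
  classical
  obtain ⟨r, hr⟩ := finite_version Γ hΓ
  choose g hg using hr
  obtain ⟨c, hc⟩ := Finset.rado_selection (β := fun _ : Γ => Fin r) g
  refine ⟨r, c, ?_⟩
  intro x y z hxy hyz hap
  obtain ⟨t, hst, ht⟩ := hc {x, y, z}
  have ex := ht x (by simp)
  have ey := ht y (by simp)
  have ez := ht z (by simp)
  have h := hg t x (hst (by simp)) y (hst (by simp)) z (hst (by simp))
    (by rw [← ex, ← ey, hxy]) (by rw [← ey, ← ez, hyz]) hap
  refine ⟨h, ?_⟩
  subst h
  apply Subtype.ext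
  apply Units.ext
  linear_combination -hap
end

section
/- The polynomial exponential equation (x·y − z + 2)·2^x·3^y + (x − y + 2z + 2)·5^x·7^y + (x·y − z + 3)·11^x·13^y = 0, with unknowns x, y, z ∈ ℤ and the left-hand side evaluated in ℚ, is not partition regular over ℤ: there exist r ∈ ℕ and a coloring c : ℤ → {1,…,r} such that no x, y, z ∈ ℤ with c(x) = c(y) = c(z) satisfy the equation. -/
def col (x : ℤ) : ℕ := (if x = 0 then 0 else if 0 < x then 1 + x % 2 else 3 + x % 3).toNat

lemma col_lt (x : ℤ) : col x < 6 := by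
  unfold col; split_ifs <;> omega

lemma col_eq (x y : ℤ) (h : col x = col y) : (x = 0 ∧ y = 0) ∨
    (0 < x ∧ 0 < y ∧ x % 2 = y % 2) ∨ (x < 0 ∧ y < 0 ∧ x % 3 = y % 3) := by
  unfold col at h; split_ifs at h <;> omega

lemma pos_case (P Q R : ℤ) (a b : ℕ) (hQ : Q % 2 = 0) (hR : R % 2 = 1)
    (h : P * 2 ^ (a + 1) * 3 ^ b + Q * 5 ^ (a + 1) * 7 ^ b + R * 11 ^ (a + 1) * 13 ^ b = 0) :
    False := by
  have h1 : Even (P * 2 ^ (a + 1) * 3 ^ b) := by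
    rw [pow_succ]; exact ⟨P * 2 ^ a * 3 ^ b, by ring⟩
  have h2 : Even (Q * 5 ^ (a + 1) * 7 ^ b) :=
    ((Int.even_iff.2 hQ).mul_right _).mul_right _
  have h3 : Odd (R * 11 ^ (a + 1) * 13 ^ b) :=
    ((Int.odd_iff.2 hR).mul (Odd.pow (by decide))).mul (Odd.pow (by decide))
  have h4 := (h1.add h2).add_odd h3
  rw [h] at h4
  exact absurd h4 (by decide)

lemma neg_case (P Q R : ℤ) (a b : ℕ) (hP : ¬ (3 : ℤ) ∣ P)
    (h : P * (5 ^ a * 7 ^ (b + 1) * 11 ^ a * 13 ^ (b + 1))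
      + Q * (2 ^ a * 3 ^ (b + 1) * 11 ^ a * 13 ^ (b + 1))
      + R * (2 ^ a * 3 ^ (b + 1) * 5 ^ a * 7 ^ (b + 1)) = 0) :
    False := by
  have h1 : (3 : ℤ) ∣ P * (5 ^ a * 7 ^ (b + 1) * 11 ^ a * 13 ^ (b + 1)) :=
    ⟨-(Q * (2 ^ a * 3 ^ b * 11 ^ a * 13 ^ (b + 1))
      + R * (2 ^ a * 3 ^ b * 5 ^ a * 7 ^ (b + 1))), by
        rw [pow_succ 3 b] at h; linear_combination h⟩
  have hp : Prime (3 : ℤ) := Int.prime_three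
  have hn : ∀ (m : ℤ) (k : ℕ), ¬ (3 : ℤ) ∣ m → ¬ (3 : ℤ) ∣ m ^ k :=
    fun m k hm hd => hm (hp.dvd_of_dvd_pow hd)
  rcases hp.dvd_or_dvd h1 with h | h
  · exact hP h
  rcases hp.dvd_or_dvd h with h | h
  · rcases hp.dvd_or_dvd h with h | h
    · rcases hp.dvd_or_dvd h with h | h
      · exact hn _ _ (by decide) h
      · exact hn _ _ (by decide) h
    · exact hn _ _ (by decide) h
  · exact hn _ _ (by decide) h

lemma mod3 (x y z : ℤ) (h1 : x % 3 = y % 3) (h2 : y % 3 = z % 3) :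
    ¬ (3 : ℤ) ∣ x * y - z + 2 := by
  intro h
  have h' : (x * y - z + 2) % 3 = 0 := Int.emod_eq_zero_of_dvd h
  have e : (x * y) % 3 = ((z % 3) * (z % 3)) % 3 := by rw [Int.mul_emod, h1, h2]
  have : z % 3 = 0 ∨ z % 3 = 1 ∨ z % 3 = 2 := by omega
  rcases this with t | t | t <;> rw [t] at e <;> norm_num at e <;> omega

lemma mod2 (x y z : ℤ) (h1 : x % 2 = y % 2) (h2 : y % 2 = z % 2) :
    (x * y - z + 3) % 2 = 1 := by
  have e : (x * y) % 2 = ((z % 2) * (z % 2)) % 2 := by rw [Int.mul_emod, h1, h2]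
  have : z % 2 = 0 ∨ z % 2 = 1 := by omega
  rcases this with t | t <;> rw [t] at e <;> norm_num at e <;> omega

/-- The polynomial exponential equation
`(xy - z + 2)·2^x·3^y + (x - y + 2z + 2)·5^x·7^y + (xy - z + 3)·11^x·13^y = 0`
is not partition regular over `ℤ`: some finite coloring of `ℤ` admits no monochromatic
solution. -/
theorem stmt_14 :
    ∃ (r : ℕ) (c : ℤ → Fin r), ¬∃ x y z : ℤ,
      c x = c y ∧ c y = c z ∧
      ((x * y - z + 2 : ℤ) : ℚ) * (2 : ℚ) ^ x * (3 : ℚ) ^ y +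
        ((x - y + 2 * z + 2 : ℤ) : ℚ) * (5 : ℚ) ^ x * (7 : ℚ) ^ y +
        ((x * y - z + 3 : ℤ) : ℚ) * (11 : ℚ) ^ x * (13 : ℚ) ^ y = 0 := by
  refine ⟨6, fun x => ⟨col x, col_lt x⟩, ?_⟩
  rintro ⟨x, y, z, h1, h2, h⟩
  simp only [Fin.mk.injEq] at h1 h2
  have key : (x = 0 ∧ y = 0 ∧ z = 0) ∨ (0 < x ∧ 0 < y ∧ x % 2 = y % 2 ∧ y % 2 = z % 2) ∨
      (x < 0 ∧ y < 0 ∧ x % 3 = y % 3 ∧ y % 3 = z % 3) := by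
    have k1 := col_eq x y h1
    have k2 := col_eq y z h2
    clear h h1 h2
    omega
  rcases key with ⟨rfl, rfl, rfl⟩ | ⟨hx, hy, e1, e2⟩ | ⟨hx, hy, e1, e2⟩
  · norm_num at h
  · have hR := mod2 x y z e1 e2
    have hQ : (x - y + 2 * z + 2) % 2 = 0 := by clear h; omega
    generalize x * y - z + 2 = P at *
    generalize x - y + 2 * z + 2 = Q at *
    generalize x * y - z + 3 = R at *
    obtain ⟨a, rfl⟩ : ∃ a : ℕ, x = ((a + 1 : ℕ) : ℤ) := ⟨(x - 1).toNat, by omega⟩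
    obtain ⟨b, rfl⟩ : ∃ b : ℕ, y = (b : ℤ) := ⟨y.toNat, by omega⟩
    simp only [zpow_natCast] at h
    exact pos_case P Q R a b hQ hR (by exact_mod_cast h)
  · have hP := mod3 x y z e1 e2
    generalize x * y - z + 2 = P at *
    generalize x - y + 2 * z + 2 = Q at *
    generalize x * y - z + 3 = R at *
    obtain ⟨a, rfl⟩ : ∃ a : ℕ, x = -(a : ℤ) := ⟨(-x).toNat, by omega⟩
    obtain ⟨b, rfl⟩ : ∃ b : ℕ, y = -((b + 1 : ℕ) : ℤ) := ⟨(-y - 1).toNat, by omega⟩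
    simp only [zpow_neg, zpow_natCast] at h
    refine neg_case P Q R a b hP ?_
    have h' : (P : ℚ) * (5 ^ a * 7 ^ (b + 1) * 11 ^ a * 13 ^ (b + 1))
      + Q * (2 ^ a * 3 ^ (b + 1) * 11 ^ a * 13 ^ (b + 1))
      + R * (2 ^ a * 3 ^ (b + 1) * 5 ^ a * 7 ^ (b + 1)) = 0 := by
      have n2 : (2 : ℚ) ^ a ≠ 0 := by positivity
      have n3 : (3 : ℚ) ^ (b + 1) ≠ 0 := by positivity
      have n5 : (5 : ℚ) ^ a ≠ 0 := by positivity
      have n7 : (7 : ℚ) ^ (b + 1) ≠ 0 := by positivity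
      have n11 : (11 : ℚ) ^ a ≠ 0 := by positivity
      have n13 : (13 : ℚ) ^ (b + 1) ≠ 0 := by positivity
      generalize (2 : ℚ) ^ a = t2 at *
      generalize (3 : ℚ) ^ (b + 1) = t3 at *
      generalize (5 : ℚ) ^ a = t5 at *
      generalize (7 : ℚ) ^ (b + 1) = t7 at *
      generalize (11 : ℚ) ^ a = t11 at *
      generalize (13 : ℚ) ^ (b + 1) = t13 at *
      field_simp at h
      linear_combination h
    exact_mod_cast h'
end

section
/- For every integer s, one has 6^s·(s² − s + 2) + 35^s·(2s + 2) + 143^s·(s² − s + 3) ≠ 0, where the powers 6^s, 35^s, 143^s are taken as rational numbers (integer powers in ℚ) and the whole expression is evaluated in ℚ. -/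
/-- For every integer `s`, `6^s·(s² - s + 2) + 35^s·(2s + 2) + 143^s·(s² - s + 3) ≠ 0`
in `ℚ`, the powers being integer powers in `ℚ`. -/
theorem stmt_15 (s : ℤ) :
    (6 : ℚ) ^ s * ((s : ℚ) ^ 2 - (s : ℚ) + 2) +
      (35 : ℚ) ^ s * (2 * (s : ℚ) + 2) +
      (143 : ℚ) ^ s * ((s : ℚ) ^ 2 - (s : ℚ) + 3) ≠ 0 := by
  apply ne_of_gt
  have h6 : (0 : ℚ) < (6 : ℚ) ^ s := by positivity
  have h35 : (0 : ℚ) < (35 : ℚ) ^ s := by positivity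
  have h143 : (0 : ℚ) < (143 : ℚ) ^ s := by positivity
  have p1 : (0 : ℚ) < (s : ℚ) ^ 2 - (s : ℚ) + 2 := by nlinarith [sq_nonneg ((s : ℚ) - 1 / 2)]
  have p3 : (0 : ℚ) < (s : ℚ) ^ 2 - (s : ℚ) + 3 := by linarith
  have q1 := mul_pos h6 p1
  have q3 := mul_pos h143 p3
  rcases le_or_gt (-1) s with hs | hs
  · have hs' : (-1 : ℚ) ≤ (s : ℚ) := by exact_mod_cast hs
    have q2 := mul_nonneg h35.le (by linarith : (0 : ℚ) ≤ 2 * (s : ℚ) + 2)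
    linarith
  · have hs' : (s : ℚ) < -1 := by exact_mod_cast hs
    have hle : (35 : ℚ) ^ s ≤ (6 : ℚ) ^ s := by
      obtain ⟨n, rfl⟩ : ∃ n : ℕ, s = -(n : ℤ) := ⟨s.natAbs, by omega⟩
      rw [zpow_neg, zpow_neg, zpow_natCast, zpow_natCast]
      gcongr
      norm_num
    have q2 := mul_le_mul_of_nonpos_right hle (by linarith : 2 * (s : ℚ) + 2 ≤ 0)
    have q4 := mul_pos h6 (by nlinarith [sq_nonneg ((s : ℚ) + 1 / 2)] : (0 : ℚ) < (s : ℚ) ^ 2 + s + 4)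
    linarith
end
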